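/- arXiv:1004.5351 — 3 statements merged into one kernel-verified Lean document; each statement's English description precedes it below -/
import Mathlib

section
/- There exists a map f : ℝ² → ℝ³ which is continuously differentiable (C¹), is ℤ²-periodic, is injective modulo ℤ² (i.e. f(x) = f(y) implies x − y ∈ ℤ × ℤ), and satisfies at every point x ∈ ℝ²: ⟪D f(x)(e₁), D f(x)(e₁)⟫ = 1, ⟪D f(x)(e₂), D f(x)(e₂)⟫ = 1, and ⟪D f(x)(e₁), D f(x)(e₂)⟫ = 0, where D f(x) is the Fréchet derivative of f at x, e₁, e₂ is the standard basis of ℝ², and ⟪·,·⟫ is the Euclidean inner product on ℝ³. In other words, the flat torus admits a C¹ isometric embedding into ℝ³. -/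
/-!
The proof is the Nash–Kuiper scheme: starting from a strictly short smooth embedding `f0` of the
torus (a small torus of revolution), corrugations are added one after the other, each of which
removes part of the difference between the flat metric and the induced one.

*One corrugation.* The metric defect is written as `∑ i, co i • (dx + slope i • dy) ^ 2` with three
fixed integer covectors `(1, 0)`, `(1, 2)`, `(1, -2)` and positive functions `co i`. This is possible
as long as the defect lies in the open cone spanned by the three squares, and the flat metric does.
To add `A • (dx + j • dy) ^ 2` to the metric of `f`, put `p = ∂₁f` and `u = ∂₂f - j • ∂₁f`, the
derivative in the direction annihilated by `dx + j • dy`. One looks for a loop `w x t`, orthogonal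
to `u x`, of mean zero in `t`, and such that `‖p + w‖ ^ 2 = ‖p‖ ^ 2 + A`. Then
`f + L⁻¹ • F (x, L * (x₀ + j * x₁))`, where `F` is the primitive of `w` in `t`, has differential
`df + w ⊗ (dx + j • dy) + O(L⁻¹)` and hence the desired metric up to `O(L⁻¹)` (`corrugate`).
The loop runs through an arc of the circle of radius `R * ‖tau u p‖`, parametrized so that its
primitive is elementary (`G1`, `G2`), and `‖w‖ ^ 2 ≤ 2 * A` (`g_small`). The periodicity of `f` is
preserved since `j` is an integer and `L` is a multiple of `2π`.

*Embeddedness.* A map which is `C⁰`-close to an embedding of the torus, and whose differential moves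
by at most half of its lower bound, is again injective (`InjMod.of_close`). In Nash's scheme, the
nearly complete removal of the defect would violate the second condition. Here only the fraction
`κ = μ / 128` of one coefficient is removed at a time, `μ` being a lower bound for the metric, which
is valid throughout because the metric increases up to errors that can be prescribed. Then the
differential moves by `O(√κ)`, which is small compared to `√μ` (`step`).

*Convergence.* After three steps, one for each covector, all coefficients of the defect have been
multiplied by `r = 1 - κ` (`step3`). So after `n` rounds they are at most `r ^ n`, the
differential moves by `O(√r ^ n)` in the next round, and the sequence converges in `C¹` to a map with
vanishing defect. The limit is injective modulo `ℤ²` because the `C⁰`-size of each step can be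
chosen small compared to the separation, under the previous maps, of points at distance
at least `1 / (n + 1)` (`Good`, `exists_seq`).
-/

open scoped RealInnerProductSpace
open scoped ContDiff

namespace FlatTorus

/-! ### A family of loops with explicit periodic primitives -/

/-- The parameter `k = 2 * R / (R + 1) ∈ (1, 2)` of the loop of radius `R > 1`. -/
noncomputable def kk (R : ℝ) : ℝ := 2 * R / (R + 1)

/-- The parameter `√(k² - 1)`: the loop of radius `R` has polar angle `θ` with
`tan (θ/2) = √(k² - 1) sin t`. -/
noncomputable def qq (R : ℝ) : ℝ := √(kk R ^ 2 - 1)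

/-- The denominator `cos² t + k² sin² t = 1 + (k² - 1) sin² t`. -/
noncomputable def dd (R t : ℝ) : ℝ := 1 + qq R ^ 2 * Real.sin t ^ 2

/-- The `2π`-periodic primitive (in `t`) of `R cos θ - 1`. -/
noncomputable def G1 (R t : ℝ) : ℝ :=
  (R + 1) * Real.arctan ((kk R - 1) * Real.sin t * Real.cos t /
    (Real.cos t ^ 2 + kk R * Real.sin t ^ 2))

/-- The `2π`-periodic primitive (in `t`) of `R sin θ`. -/
noncomputable def G2 (R t : ℝ) : ℝ :=
  -(R / kk R) * (Real.log (kk R + qq R * Real.cos t) - Real.log (kk R - qq R * Real.cos t))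

/-- `R cos θ - 1`, where `tan (θ/2) = √(k² - 1) sin t`. -/
noncomputable def g1 (R t : ℝ) : ℝ := R * (2 / dd R t - 1) - 1

/-- `R sin θ`, where `tan (θ/2) = √(k² - 1) sin t`. -/
noncomputable def g2 (R t : ℝ) : ℝ := R * (2 * qq R * Real.sin t / dd R t)

lemma one_lt_kk {R : ℝ} (hR : 1 < R) : 1 < kk R := by
  unfold kk; rw [lt_div_iff₀ (by linarith)]; linarith

lemma qq_sq {R : ℝ} (hR : 1 < R) : qq R ^ 2 = kk R ^ 2 - 1 := by
  have := one_lt_kk hR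
  unfold qq; rw [Real.sq_sqrt]; nlinarith

lemma qq_pos {R : ℝ} (hR : 1 < R) : 0 < qq R := by
  have := one_lt_kk hR
  unfold qq; apply Real.sqrt_pos.2; nlinarith

lemma qq_cos_lt {R : ℝ} (hR : 1 < R) (t : ℝ) : |qq R * Real.cos t| < kk R := by
  have h1 := one_lt_kk hR
  have h2 := qq_sq hR
  have h3 := qq_pos hR
  have h4 : qq R < kk R := by nlinarith
  rw [abs_mul, abs_of_pos h3]
  nlinarith [Real.abs_cos_le_one t]

lemma dd_pos (R t : ℝ) : 0 < dd R t := by unfold dd; positivity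

lemma den_pos {R : ℝ} (hR : 1 < R) (t : ℝ) :
    0 < Real.cos t ^ 2 + kk R * Real.sin t ^ 2 := by
  have h1 := one_lt_kk hR
  nlinarith [Real.sin_sq_add_cos_sq t, sq_nonneg (Real.sin t)]

lemma dd_eq {R : ℝ} (hR : 1 < R) (t : ℝ) :
    dd R t = Real.cos t ^ 2 + kk R ^ 2 * Real.sin t ^ 2 := by
  unfold dd; rw [qq_sq hR, Real.cos_sq']; ring

lemma hasDerivAt_G1 {R : ℝ} (hR : 1 < R) (t : ℝ) : HasDerivAt (G1 R) (g1 R t) t := by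
  have hk := one_lt_kk hR
  have hden := den_pos hR t
  have hs := Real.hasDerivAt_sin t
  have hc := Real.hasDerivAt_cos t
  have h1 := ((((hs.const_mul (kk R - 1)).mul hc).div
    ((hc.pow 2).add ((hs.pow 2).const_mul (kk R))) hden.ne').arctan).const_mul (R + 1)
  refine h1.congr_deriv ?_
  have hkR : R * 2 = (R + 1) * kk R := by unfold kk; field_simp
  have hd : 0 < Real.cos t ^ 2 + kk R ^ 2 * Real.sin t ^ 2 := dd_eq hR t ▸ dd_pos R t
  have hg : g1 R t = (R + 1) * (kk R / dd R t - 1) := by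
    have : g1 R t = (R * 2) / dd R t - (R + 1) := by unfold g1; ring
    rw [this, hkR]; ring
  rw [hg, dd_eq hR]
  have hsc := Real.sin_sq_add_cos_sq t
  simp only [Pi.mul_apply, Pi.add_apply, Pi.div_apply, Pi.pow_apply]
  generalize Real.sin t = s at *
  generalize Real.cos t = c at *
  generalize kk R = k at *
  congr 1
  have hsplit : (c ^ 2 + k * s ^ 2) ^ 2 + ((k - 1) * s * c) ^ 2 = c ^ 2 + k ^ 2 * s ^ 2 := by
    linear_combination (c ^ 2 + k ^ 2 * s ^ 2) * hsc
  have h2 : 1 + ((k - 1) * s * c / (c ^ 2 + k * s ^ 2)) ^ 2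
      = (c ^ 2 + k ^ 2 * s ^ 2) / (c ^ 2 + k * s ^ 2) ^ 2 := by
    rw [← hsplit]; field_simp
  rw [h2]
  field_simp
  have hc2 : c ^ 2 = 1 - s ^ 2 := by linarith
  have hc4 : c ^ 4 = (1 - s ^ 2) ^ 2 := by rw [← hc2]; ring
  norm_num
  ring_nf
  simp only [hc2, hc4]
  ring_nf

lemma hasDerivAt_G2 {R : ℝ} (hR : 1 < R) (t : ℝ) : HasDerivAt (G2 R) (g2 R t) t := by
  have hk := one_lt_kk hR
  have hq := abs_lt.1 (qq_cos_lt hR t)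
  have hc := (Real.hasDerivAt_cos t).const_mul (qq R)
  have ha : 0 < kk R + qq R * Real.cos t := by linarith
  have hb : 0 < kk R - qq R * Real.cos t := by linarith
  have h1 := (((hc.const_add (kk R)).log ha.ne').sub ((hc.const_sub (kk R)).log hb.ne')).const_mul
    (-(R / kk R))
  refine h1.congr_deriv ?_
  have hd : dd R t = (kk R + qq R * Real.cos t) * (kk R - qq R * Real.cos t) := by
    have := qq_sq hR
    unfold dd; rw [Real.sin_sq]; linear_combination this
  unfold g2
  rw [hd]
  field_simp
  ring

lemma G1_periodic (R t : ℝ) : G1 R (t + 2 * Real.pi) = G1 R t := by simp [G1]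

lemma G2_periodic (R t : ℝ) : G2 R (t + 2 * Real.pi) = G2 R t := by simp [G2]

lemma g_sq {R : ℝ} (t : ℝ) : (1 + g1 R t) ^ 2 + g2 R t ^ 2 = R ^ 2 := by
  have h := dd_pos R t
  have hd : dd R t = 1 + qq R ^ 2 * Real.sin t ^ 2 := rfl
  unfold g1 g2
  have : (2 / dd R t - 1) ^ 2 + (2 * qq R * Real.sin t / dd R t) ^ 2 = 1 := by
    field_simp
    rw [hd]; ring
  linear_combination R ^ 2 * this

/-- The loop stays within distance `√2 √(R² - 1)` of its mean value. This is the estimate that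
makes the successive `C¹` corrections summable. -/
lemma g_small {R : ℝ} (hR : 1 < R) (t : ℝ) : g1 R t ^ 2 + g2 R t ^ 2 ≤ 2 * (R ^ 2 - 1) := by
  have h := g_sq (R := R) t
  have hk := one_lt_kk hR
  have hdle : dd R t ≤ kk R ^ 2 := by
    have := qq_sq hR
    unfold dd
    nlinarith [Real.sin_sq_le_one t, sq_nonneg (qq R)]
  have hinv : 1 / kk R ^ 2 ≤ 1 / dd R t := one_div_le_one_div_of_le (dd_pos R t) hdle
  have hkv : 1 / kk R ^ 2 = (R + 1) ^ 2 / (4 * R ^ 2) := by unfold kk; field_simp; norm_num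
  have hg : g1 R t = 2 * R * (1 / dd R t) - R - 1 := by unfold g1; ring
  have h3 : 2 * R * ((R + 1) ^ 2 / (4 * R ^ 2)) = (R + 1) ^ 2 / (2 * R) := by field_simp; norm_num
  have h4 : (R + 1) ^ 2 / (2 * R) - R - 1 ≤ g1 R t := by
    rw [hg, ← h3, ← hkv]; nlinarith
  have h5 : -(R ^ 2 - 1) / 2 ≤ (R + 1) ^ 2 / (2 * R) - R - 1 := by
    rw [← sub_nonneg]
    have : (R + 1) ^ 2 / (2 * R) - R - 1 - -(R ^ 2 - 1) / 2
        = (R ^ 2 - 1) * (R - 1) / (2 * R) := by field_simp; ring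
    rw [this]
    apply div_nonneg (mul_nonneg _ _) <;> nlinarith
  nlinarith

section Smooth

variable {X : Type*} [NormedAddCommGroup X] [NormedSpace ℝ X]

lemma contDiff_kk {R : X → ℝ} (hR : ContDiff ℝ ∞ R) (h : ∀ x, 1 < R x) :
    ContDiff ℝ ∞ (fun x => kk (R x)) := by
  unfold kk
  exact (contDiff_const.mul hR).div (hR.add contDiff_const) (fun x => by linarith [h x])

lemma contDiff_qq {R : X → ℝ} (hR : ContDiff ℝ ∞ R) (h : ∀ x, 1 < R x) :
    ContDiff ℝ ∞ (fun x => qq (R x)) := by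
  unfold qq
  refine ContDiff.sqrt (((contDiff_kk hR h).pow 2).sub contDiff_const) (fun x => ?_)
  nlinarith [one_lt_kk (h x)]

lemma contDiff_G1 {R T : X → ℝ} (hR : ContDiff ℝ ∞ R) (hT : ContDiff ℝ ∞ T) (h : ∀ x, 1 < R x) :
    ContDiff ℝ ∞ (fun x => G1 (R x) (T x)) := by
  have hk := contDiff_kk hR h
  unfold G1
  refine (hR.add contDiff_const).mul (ContDiff.arctan (ContDiff.div ?_ ?_ ?_))
  · exact ((hk.sub contDiff_const).mul hT.sin).mul hT.cos
  · exact (hT.cos.pow 2).add (hk.mul (hT.sin.pow 2))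
  · exact fun x => (den_pos (h x) (T x)).ne'

lemma contDiff_G2 {R T : X → ℝ} (hR : ContDiff ℝ ∞ R) (hT : ContDiff ℝ ∞ T) (h : ∀ x, 1 < R x) :
    ContDiff ℝ ∞ (fun x => G2 (R x) (T x)) := by
  have hk := contDiff_kk hR h
  have hq := contDiff_qq hR h
  unfold G2
  refine ContDiff.mul (hR.div hk ?_).neg (ContDiff.sub (ContDiff.log ?_ ?_) (ContDiff.log ?_ ?_))
  · exact fun x => by linarith [one_lt_kk (h x)]
  · exact hk.add (hq.mul hT.cos)
  · intro x
    have := abs_lt.1 (qq_cos_lt (h x) (T x))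
    exact (by linarith : (0:ℝ) < _).ne'
  · exact hk.sub (hq.mul hT.cos)
  · intro x
    have := abs_lt.1 (qq_cos_lt (h x) (T x))
    exact (by linarith : (0:ℝ) < _).ne'

end Smooth

/-! ### The corrugation profile -/

/-- The plane, the domain of all the maps. -/
abbrev E2 := EuclideanSpace ℝ (Fin 2)

/-- The space, the target of all the maps. -/
abbrev E3 := EuclideanSpace ℝ (Fin 3)

/-- The cross product of `ℝ³`, on `EuclideanSpace`. -/
noncomputable def cr (a b : E3) : E3 :=
  !₂[a 1 * b 2 - a 2 * b 1, a 2 * b 0 - a 0 * b 2, a 0 * b 1 - a 1 * b 0]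

lemma inner3 (a b : E3) : ⟪a, b⟫ = a 0 * b 0 + a 1 * b 1 + a 2 * b 2 := by
  simp [PiLp.inner_apply, Fin.sum_univ_three, mul_comm]

lemma inner_cr_left (a b : E3) : ⟪a, cr a b⟫ = 0 := by
  rw [inner3]; simp [cr]; ring

lemma inner_cr_right (a b : E3) : ⟪b, cr a b⟫ = 0 := by
  rw [inner3]; simp [cr]; ring

lemma inner_cr_cr (a b : E3) : ⟪cr a b, cr a b⟫ = ⟪a, a⟫ * ⟪b, b⟫ - ⟪a, b⟫ ^ 2 := by
  simp only [inner3]; simp [cr]; ring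

lemma contDiff_cr {X : Type*} [NormedAddCommGroup X] [NormedSpace ℝ X] {a b : X → E3}
    (ha : ContDiff ℝ ∞ a) (hb : ContDiff ℝ ∞ b) : ContDiff ℝ ∞ (fun x => cr (a x) (b x)) := by
  rw [contDiff_euclidean] at ha hb ⊢
  intro i
  fin_cases i
  · exact ((ha 1).mul (hb 2)).sub ((ha 2).mul (hb 1))
  · exact ((ha 2).mul (hb 0)).sub ((ha 0).mul (hb 2))
  · exact ((ha 0).mul (hb 1)).sub ((ha 1).mul (hb 0))

/-- The component of `p` orthogonal to `u`. -/
noncomputable def tau (u p : E3) : E3 := p - (⟪p, u⟫ / ⟪u, u⟫) • u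

/-- The normal vector to the plane spanned by `u` and `p`, of the same length as `tau u p`. -/
noncomputable def nor (u p : E3) : E3 := (1 / ‖u‖) • cr u p

lemma inner_tau (u p : E3) (hu : u ≠ 0) : ⟪u, tau u p⟫ = 0 := by
  have : ⟪u, u⟫ ≠ 0 := inner_self_ne_zero.2 hu
  rw [tau, inner_sub_right, inner_smul_right, real_inner_comm u p]
  field_simp; ring

lemma inner_nor (u p : E3) : ⟪u, nor u p⟫ = 0 := by
  rw [nor, inner_smul_right, inner_cr_left, mul_zero]

lemma inner_tau_nor (u p : E3) : ⟪tau u p, nor u p⟫ = 0 := by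
  rw [tau, inner_sub_left, inner_smul_left, inner_nor, nor, inner_smul_right, inner_cr_right]
  simp

lemma inner_tau_tau (u p : E3) (hu : u ≠ 0) :
    ⟪tau u p, tau u p⟫ = ⟪p, p⟫ - ⟪p, u⟫ ^ 2 / ⟪u, u⟫ := by
  have : ⟪u, u⟫ ≠ 0 := inner_self_ne_zero.2 hu
  simp only [tau, inner_sub_left, inner_sub_right, inner_smul_left, inner_smul_right,
    real_inner_comm p u]
  simp
  field_simp; ring

lemma inner_nor_nor (u p : E3) (hu : u ≠ 0) :
    ⟪nor u p, nor u p⟫ = ⟪tau u p, tau u p⟫ := by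
  have h : ⟪u, u⟫ ≠ 0 := inner_self_ne_zero.2 hu
  have h2 : ‖u‖ ≠ 0 := norm_ne_zero_iff.2 hu
  rw [inner_tau_tau u p hu, nor, inner_smul_left, inner_smul_right, inner_cr_cr,
    real_inner_comm u p]
  simp
  field_simp

/-- The radius of the loop along which the component `tau u p` is turned in order to increase the
squared length of `p` by `A`. -/
noncomputable def rad (u p : E3) (A : ℝ) : ℝ := √(1 + A / ⟪tau u p, tau u p⟫)

lemma one_lt_rad {u p : E3} {A : ℝ} (hA : 0 < A) (ht : 0 < ⟪tau u p, tau u p⟫) :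
    1 < rad u p A := by
  unfold rad
  rw [Real.lt_sqrt (by norm_num)]
  have := div_pos hA ht
  linarith

lemma rad_sq {u p : E3} {A : ℝ} (hA : 0 < A) (ht : 0 < ⟪tau u p, tau u p⟫) :
    (rad u p A ^ 2 - 1) * ⟪tau u p, tau u p⟫ = A := by
  have := div_pos hA ht
  unfold rad
  rw [Real.sq_sqrt (by linarith)]
  field_simp
  ring

/-- The corrugation profile with phase `t`: the periodic primitive of `prof'`. -/
noncomputable def prof (u p : E3) (A t : ℝ) : E3 :=
  G1 (rad u p A) t • tau u p + G2 (rad u p A) t • nor u p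

/-- The derivative of the corrugation profile with respect to the phase. Adding it to `p` replaces
`tau u p` by a vector of length `rad u p A * ‖tau u p‖` in the plane orthogonal to `u`. -/
noncomputable def prof' (u p : E3) (A t : ℝ) : E3 :=
  g1 (rad u p A) t • tau u p + g2 (rad u p A) t • nor u p

lemma prof_periodic (u p : E3) (A t : ℝ) : prof u p A (t + 2 * Real.pi) = prof u p A t := by
  simp [prof, G1_periodic, G2_periodic]

lemma hasDerivAt_prof {u p : E3} {A : ℝ} (hA : 0 < A)
    (ht : 0 < ⟪tau u p, tau u p⟫) (t : ℝ) : HasDerivAt (prof u p A) (prof' u p A t) t := by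
  have hR := one_lt_rad hA ht
  exact ((hasDerivAt_G1 hR t).smul_const _).add ((hasDerivAt_G2 hR t).smul_const _)

lemma inner_prof' {u p : E3} {A : ℝ} (hu : u ≠ 0) (t : ℝ) : ⟪u, prof' u p A t⟫ = 0 := by
  simp [prof', inner_add_right, inner_smul_right, inner_tau u p hu, inner_nor]

lemma inner_prof'_self {u p : E3} {A : ℝ} (hA : 0 < A)
    (ht : 0 < ⟪tau u p, tau u p⟫) (hu : u ≠ 0) (t : ℝ) : ⟪prof' u p A t, prof' u p A t⟫ ≤ 2 * A := by
  have hR := one_lt_rad hA ht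
  have h := g_small hR t
  have h2 := rad_sq hA ht
  have : ⟪prof' u p A t, prof' u p A t⟫
      = (g1 (rad u p A) t ^ 2 + g2 (rad u p A) t ^ 2) * ⟪tau u p, tau u p⟫ := by
    simp only [prof', inner_add_right, inner_add_left, inner_smul_right, inner_smul_left,
      inner_tau_nor, real_inner_comm (tau u p) (nor u p), inner_nor_nor u p hu]
    simp; ring
  rw [this]
  nlinarith

/-- The corrugation increases the squared length of `p` by exactly `A`. Since `prof' u p A t` is
orthogonal to `u` (see `inner_prof'`), it does not change the inner product of `p` with `u`. -/
lemma inner_add_prof' {u p : E3} {A : ℝ} (hA : 0 < A)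
    (ht : 0 < ⟪tau u p, tau u p⟫) (hu : u ≠ 0) (t : ℝ) :
    ⟪p + prof' u p A t, p + prof' u p A t⟫ = ⟪p, p⟫ + A := by
  have h := g_sq (R := rad u p A) t
  have h2 := rad_sq hA ht
  have hp : p = tau u p + (⟪p, u⟫ / ⟪u, u⟫) • u := by simp [tau]
  have h3 : ⟪p, tau u p⟫ = ⟪tau u p, tau u p⟫ := by
    nth_rw 1 [hp]
    rw [inner_add_left, inner_smul_left, inner_tau u p hu]; simp
  have h4 : ⟪p, nor u p⟫ = 0 := by
    rw [nor, inner_smul_right, inner_cr_right, mul_zero]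
  have h5 : ⟪prof' u p A t, prof' u p A t⟫
      = (g1 (rad u p A) t ^ 2 + g2 (rad u p A) t ^ 2) * ⟪tau u p, tau u p⟫ := by
    simp only [prof', inner_add_right, inner_add_left, inner_smul_right, inner_smul_left,
      inner_tau_nor, real_inner_comm (tau u p) (nor u p), inner_nor_nor u p hu]
    simp; ring
  have h6 : ⟪p, prof' u p A t⟫ = g1 (rad u p A) t * ⟪tau u p, tau u p⟫ := by
    simp only [prof', inner_add_right, inner_smul_right, h3, h4]; simp
  rw [inner_add_left, inner_add_right, inner_add_right, h5, real_inner_comm p (prof' u p A t), h6]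
  linear_combination ⟪tau u p, tau u p⟫ * h + h2

lemma contDiff_prof {X : Type*} [NormedAddCommGroup X] [NormedSpace ℝ X] {u p : X → E3}
    {A T : X → ℝ} (hu : ContDiff ℝ ∞ u) (hp : ContDiff ℝ ∞ p) (hA : ContDiff ℝ ∞ A)
    (hT : ContDiff ℝ ∞ T) (hu0 : ∀ x, u x ≠ 0) (hA0 : ∀ x, 0 < A x)
    (ht : ∀ x, 0 < ⟪tau (u x) (p x), tau (u x) (p x)⟫) :
    ContDiff ℝ ∞ (fun x => prof (u x) (p x) (A x) (T x)) := by
  have hτ : ContDiff ℝ ∞ (fun x => tau (u x) (p x)) := by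
    unfold tau
    exact hp.sub (((hp.inner ℝ hu).div (hu.inner ℝ hu)
      (fun x => inner_self_ne_zero.2 (hu0 x))).smul hu)
  have hn : ContDiff ℝ ∞ (fun x => nor (u x) (p x)) := by
    unfold nor
    exact (contDiff_const.div (hu.norm ℝ hu0) (fun x => norm_ne_zero_iff.2 (hu0 x))).smul
      (contDiff_cr hu hp)
  have hR : ContDiff ℝ ∞ (fun x => rad (u x) (p x) (A x)) := by
    unfold rad
    refine ContDiff.sqrt (contDiff_const.add (hA.div (hτ.inner ℝ hτ) (fun x => (ht x).ne'))) ?_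
    intro x
    have := div_pos (hA0 x) (ht x)
    positivity
  have h1 : ∀ x, 1 < rad (u x) (p x) (A x) := fun x => one_lt_rad (hA0 x) (ht x)
  unfold prof
  exact ((contDiff_G1 hR hT h1).smul hτ).add ((contDiff_G2 hR hT h1).smul hn)

/-! ### Corrugating a periodic map -/

/-- The first vector of the standard basis of the plane. -/
noncomputable abbrev e1 : E2 := EuclideanSpace.single 0 1

/-- The second vector of the standard basis of the plane. -/
noncomputable abbrev e2 : E2 := EuclideanSpace.single 1 1

/-- `ℤ²`-periodicity. -/
def Per {α : Type*} (f : E2 → α) : Prop := ∀ (x : E2) (m k : ℤ), f (x + m • e1 + k • e2) = f x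

lemma exists_translate (x : E2) : ∃ m k : ℤ, ‖x + m • e1 + k • e2‖ ≤ 2 := by
  refine ⟨-⌊x 0⌋, -⌊x 1⌋, ?_⟩
  rw [EuclideanSpace.norm_eq, Real.sqrt_le_left (by norm_num), Fin.sum_univ_two]
  have h0 := Int.fract_nonneg (x 0)
  have h1 := Int.fract_lt_one (x 0)
  have h2 := Int.fract_nonneg (x 1)
  have h3 := Int.fract_lt_one (x 1)
  have h4 : (x + (-⌊x 0⌋) • e1 + (-⌊x 1⌋) • e2 : E2) 0 = Int.fract (x 0) := by
    simp [← Int.self_sub_floor, sub_eq_add_neg]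
  have h5 : (x + (-⌊x 0⌋) • e1 + (-⌊x 1⌋) • e2 : E2) 1 = Int.fract (x 1) := by
    simp [← Int.self_sub_floor, sub_eq_add_neg]
  rw [h4, h5, Real.norm_eq_abs, Real.norm_eq_abs, sq_abs, sq_abs]
  nlinarith

lemma Per.fderiv {f : E2 → E3} (hf : Per f) : Per (fderiv ℝ f) := by
  intro x m k
  have : (fun y => f (y + (m • e1 + k • e2))) = f := by
    ext1 y; rw [← add_assoc]; exact hf y m k
  conv_rhs => rw [← this]
  rw [fderiv_comp_add_right, add_assoc]

/-- A continuous function which is periodic in all its variables is bounded. -/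
lemma exists_bound {V : Type*} [NormedAddCommGroup V] {φ : E2 × ℝ → V} (hφ : Continuous φ)
    (h1 : ∀ t, Per fun x => φ (x, t)) (h2 : ∀ x t, φ (x, t + 2 * Real.pi) = φ (x, t)) :
    ∃ C > 0, ∀ z, ‖φ z‖ ≤ C := by
  have hK : IsCompact (Metric.closedBall (0 : E2) 2 ×ˢ Set.Icc (0 : ℝ) (0 + 2 * Real.pi)) :=
    (isCompact_closedBall _ _).prod isCompact_Icc
  obtain ⟨C, hC⟩ := hK.exists_bound_of_continuousOn hφ.continuousOn
  refine ⟨|C| + 1, by positivity, fun ⟨x, t⟩ => ?_⟩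
  obtain ⟨m, k, hmk⟩ := exists_translate x
  obtain ⟨y, hy, hyt⟩ := Function.Periodic.exists_mem_Ico (f := fun t => φ (x, t)) (h2 x)
    (by positivity) t 0
  have e : φ (x, t) = φ (x + m • e1 + k • e2, y) := by
    exact hyt.trans (h1 y x m k).symm
  rw [e]
  refine (hC _ ⟨by simpa using hmk, Set.Ico_subset_Icc_self hy⟩).trans ?_
  linarith [le_abs_self C]

/-- Adding to `f` an oscillation of small amplitude `1/L` and high frequency `L` in the direction
of the integer covector `(1, j)` changes `f` by `O(1/L)`, while the derivative of the profile `F`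
in the phase variable gets added to the differential, up to `O(1/L)`. -/
lemma corrugate {f : E2 → E3} (hf : ContDiff ℝ ∞ f) (hfp : Per f) {F : E2 × ℝ → E3}
    (hF : ContDiff ℝ ∞ F) (h1 : ∀ t, Per fun x => F (x, t))
    (h2 : ∀ x t, F (x, t + 2 * Real.pi) = F (x, t)) {w : E2 → ℝ → E3}
    (hw : ∀ x t, HasDerivAt (fun s => F (x, s)) (w x t) t) (j : ℤ) {ε : ℝ} (hε : 0 < ε) :
    ∃ g : E2 → E3, ContDiff ℝ ∞ g ∧ Per g ∧ (∀ x, ‖g x - f x‖ ≤ ε) ∧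
      ∀ x, ∃ t, ‖fderiv ℝ g x e1 - (fderiv ℝ f x e1 + w x t)‖ ≤ ε ∧
        ‖fderiv ℝ g x e2 - (fderiv ℝ f x e2 + (j : ℝ) • w x t)‖ ≤ ε := by
  obtain ⟨C, hC, hFC⟩ := exists_bound hF.continuous h1 h2
  have hdF : Differentiable ℝ F := hF.differentiable (by simp)
  have hcF : Continuous (fderiv ℝ F) := hF.continuous_fderiv (by simp)
  obtain ⟨C', hC', hFC'⟩ := exists_bound hcF
    (fun t x m k => by
      have : (fun y => F (y + (m • e1 + k • e2, (0 : ℝ)))) = F := by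
        ext1 ⟨y, s⟩
        simp only [Prod.mk_add_mk, add_zero, ← add_assoc]; exact h1 s y m k
      conv_rhs => rw [← this]
      beta_reduce
      rw [fderiv_comp_add_right]
      simp [add_assoc])
    (fun x t => by
      have : (fun y => F (y + ((0 : E2), 2 * Real.pi))) = F := by
        ext1 ⟨y, s⟩
        simp only [Prod.mk_add_mk, add_zero]; exact h2 y s
      conv_rhs => rw [← this]
      beta_reduce
      rw [fderiv_comp_add_right]
      simp)
  -- the frequency is an integer multiple of `2π`, which makes the result `ℤ²`-periodic
  obtain ⟨N, hN⟩ := exists_nat_gt (max (C / ε) (C' / ε))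
  have hN0 : (0 : ℝ) < N := lt_of_lt_of_le (by positivity) ((le_max_left _ _).trans hN.le)
  have hπ := Real.pi_gt_three
  set L : ℝ := N * (2 * Real.pi) with hL
  have hNL : (N : ℝ) ≤ L := by nlinarith
  have hL0 : 0 < L := hN0.trans_le hNL
  have hLC : L⁻¹ * C ≤ ε := by
    rw [inv_mul_le_iff₀ hL0]
    have := (le_max_left _ _).trans_lt hN
    rw [div_lt_iff₀ hε] at this
    nlinarith
  have hLC' : L⁻¹ * C' ≤ ε := by
    rw [inv_mul_le_iff₀ hL0]
    have := (le_max_right _ _).trans_lt hN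
    rw [div_lt_iff₀ hε] at this
    nlinarith
  let ℓ : E2 →L[ℝ] ℝ := EuclideanSpace.proj 0 + (j : ℝ) • EuclideanSpace.proj 1
  have hℓ1 : ℓ e1 = 1 := by simp [ℓ]
  have hℓ2 : ℓ e2 = j := by simp [ℓ]
  refine ⟨fun x => f x + L⁻¹ • F (x, L * ℓ x), ?_, ?_, ?_, ?_⟩
  · exact hf.add (ContDiff.const_smul L⁻¹ (hF.comp (contDiff_id.prodMk
      (contDiff_const.mul ℓ.contDiff))))
  · intro x m k
    have e : L * ℓ (x + m • e1 + k • e2) = L * ℓ x + ((N * (m + j * k) : ℤ) : ℝ) * (2 * Real.pi) := by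
      rw [map_add, map_add, map_zsmul, map_zsmul, hℓ1, hℓ2, hL]
      push_cast
      simp only [zsmul_eq_mul]
      ring
    have hp : Function.Periodic (fun t => F (x, t)) (2 * Real.pi) := h2 x
    simp only [e]
    rw [hfp x m k]
    congr 2
    exact (h1 _ x m k).trans (hp.int_mul _ _)
  · intro x
    rw [add_sub_cancel_left, norm_smul, norm_inv, Real.norm_of_nonneg hL0.le]
    exact (mul_le_mul_of_nonneg_left (hFC _) (by positivity)).trans hLC
  · intro x
    refine ⟨L * ℓ x, ?_⟩
    have hd : HasFDerivAt (fun x => f x + L⁻¹ • F (x, L * ℓ x))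
        (fderiv ℝ f x + L⁻¹ • (fderiv ℝ F (x, L * ℓ x)).comp
          ((ContinuousLinearMap.id ℝ E2).prod (L • ℓ))) x := by
      refine (hf.differentiable (by simp) x).hasFDerivAt.add ?_
      refine HasFDerivAt.const_smul (f := fun x => F (x, L * ℓ x)) ?_ L⁻¹
      exact HasFDerivAt.comp x (hdF _).hasFDerivAt
        ((hasFDerivAt_id x).prodMk (ℓ.hasFDerivAt.const_smul L))
    have hw' : fderiv ℝ F (x, L * ℓ x) (0, 1) = w x (L * ℓ x) := by
      refine HasDerivAt.unique ?_ (hw x (L * ℓ x))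
      have := (hdF (x, L * ℓ x)).hasFDerivAt.comp_hasDerivAt (L * ℓ x)
        ((hasDerivAt_const (L * ℓ x) x).prodMk (hasDerivAt_id (L * ℓ x)))
      simpa [Function.comp_def] using this
    have key : ∀ v : E2, fderiv ℝ (fun x => f x + L⁻¹ • F (x, L * ℓ x)) x v
        - (fderiv ℝ f x v + ℓ v • w x (L * ℓ x)) = L⁻¹ • fderiv ℝ F (x, L * ℓ x) (v, 0) := by
      intro v
      rw [hd.fderiv, ← hw']
      have : ((v, L * ℓ v) : E2 × ℝ) = (v, 0) + (L * ℓ v) • (0, 1) := by simp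
      simp only [add_apply, smul_apply,
        ContinuousLinearMap.comp_apply, ContinuousLinearMap.prod_apply,
        ContinuousLinearMap.id_apply, smul_eq_mul]
      rw [this, map_add, map_smul, smul_add, smul_smul, ← mul_assoc, inv_mul_cancel₀ hL0.ne', one_mul]
      abel
    have bd : ∀ v : E2, ‖v‖ ≤ 1 → ‖L⁻¹ • fderiv ℝ F (x, L * ℓ x) (v, 0)‖ ≤ ε := by
      intro v hv
      rw [norm_smul, norm_inv, Real.norm_of_nonneg hL0.le]
      refine le_trans (mul_le_mul_of_nonneg_left ?_ (by positivity)) hLC'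
      refine (ContinuousLinearMap.le_opNorm _ _).trans ?_
      have : ‖((v, 0) : E2 × ℝ)‖ ≤ 1 := by simpa [Prod.norm_def] using hv
      calc _ ≤ C' * 1 := mul_le_mul (hFC' _) this (norm_nonneg _) hC'.le
        _ = C' := mul_one _
    constructor
    · have := bd e1 (by simp)
      rw [← key, hℓ1, one_smul] at this
      exact this
    · have := bd e2 (by simp)
      rw [← key, hℓ2] at this
      exact this

/-! ### Embeddings of the torus and metric defects -/

/-- Injectivity modulo `ℤ²`. -/
def InjMod (f : E2 → E3) : Prop :=
  ∀ x y : E2, f x = f y → ∃ m k : ℤ, x - y = m • e1 + k • e2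

/-- A continuous embedding of the torus separates points at distance `≥ r` uniformly. -/
lemma InjMod.separated {f : E2 → E3} (hi : InjMod f) (hf : Continuous f) (hp : Per f) {r : ℝ}
    (hr : 0 < r) : ∃ σ > 0, ∀ x y : E2,
      (∀ m k : ℤ, r ≤ ‖x - y - (m • e1 + k • e2)‖) → σ ≤ ‖f x - f y‖ := by
  let K : Set (E2 × E2) := (Metric.closedBall 0 2 ×ˢ Metric.closedBall 0 2) ∩
    ⋂ (m : ℤ) (k : ℤ), {z | r ≤ ‖z.1 - z.2 - (m • e1 + k • e2)‖}
  have hK : IsCompact K := by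
    refine ((isCompact_closedBall _ _).prod (isCompact_closedBall _ _)).inter_right ?_
    refine isClosed_iInter fun m => isClosed_iInter fun k => isClosed_le continuous_const ?_
    fun_prop
  have hc : Continuous fun z : E2 × E2 => ‖f z.1 - f z.2‖ := by fun_prop
  obtain ⟨σ, hσ, h⟩ := hK.exists_forall_le' hc.continuousOn (a := 0) (by
    rintro ⟨x, y⟩ ⟨-, hz⟩
    rw [norm_pos_iff, sub_ne_zero]
    intro hxy
    obtain ⟨m, k, hmk⟩ := hi x y hxy
    simp only [Set.mem_iInter, Set.mem_ofPred_eq] at hz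
    have := hz m k
    rw [hmk, sub_self, norm_zero] at this
    linarith)
  refine ⟨σ, hσ, fun x y hxy => ?_⟩
  obtain ⟨m, k, hx⟩ := exists_translate x
  obtain ⟨m', k', hy⟩ := exists_translate y
  rw [← hp x m k, ← hp y m' k']
  refine h (_, _) ⟨⟨by simpa using hx, by simpa using hy⟩, ?_⟩
  simp only [Set.mem_iInter, Set.mem_ofPred_eq]
  intro a b
  refine (hxy (a - m + m') (b - k + k')).trans_eq ?_
  congr 1
  module

/-- The differential of a smooth map of the torus is uniformly continuous. -/
lemma exists_uniform {f : E2 → E3} (hf : ContDiff ℝ ∞ f) (hp : Per f) {c : ℝ} (hc : 0 < c) :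
    ∃ r > 0, ∀ x z : E2, ‖z - x‖ < r → ‖fderiv ℝ f z - fderiv ℝ f x‖ ≤ c := by
  have hcont : Continuous (fderiv ℝ f) := hf.continuous_fderiv (by simp)
  have hu := (isCompact_closedBall (0 : E2) 3).uniformContinuousOn_of_continuous hcont.continuousOn
  rw [Metric.uniformContinuousOn_iff] at hu
  obtain ⟨δ, hδ, h⟩ := hu c hc
  refine ⟨min δ 1, by positivity, fun x z hxz => ?_⟩
  obtain ⟨m, k, hx⟩ := exists_translate x
  have hd : (z + m • e1 + k • e2) - (x + m • e1 + k • e2) = z - x := by abel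
  have hz : ‖z + m • e1 + k • e2‖ ≤ 3 := by
    have h1 := norm_add_le (x + m • e1 + k • e2) ((z + m • e1 + k • e2) - (x + m • e1 + k • e2))
    rw [add_sub_cancel, hd] at h1
    linarith [hxz.trans_le (min_le_right δ 1)]
  have := h (z + m • e1 + k • e2) (by simpa using hz) (x + m • e1 + k • e2)
    (by simpa using hx.trans (by norm_num))
    (by rw [dist_eq_norm, hd]; exact hxz.trans_le (min_le_left _ _))
  rw [hp.fderiv z m k, hp.fderiv x m k, dist_eq_norm] at this
  exact this.le

/-- A `C⁰`-small perturbation of an immersed embedding of the torus is injective, provided that the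
differential moves by at most half of its lower bound: nearby points are then separated by the
mean value inequality, and distant points by compactness. -/
lemma InjMod.of_close {f : E2 → E3} (hi : InjMod f) (hf : ContDiff ℝ ∞ f) (hp : Per f) {l : ℝ}
    (hl : 0 < l) (him : ∀ x v, l * ‖v‖ ≤ ‖fderiv ℝ f x v‖) :
    ∃ ε > 0, ∀ g : E2 → E3, Differentiable ℝ g → Per g → (∀ x, ‖g x - f x‖ ≤ ε) →
      (∀ x, ‖fderiv ℝ g x - fderiv ℝ f x‖ ≤ l / 2) → InjMod g := by
  obtain ⟨r, hr, hunif⟩ := exists_uniform hf hp (c := l / 4) (by positivity)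
  obtain ⟨σ, hσ, hsep⟩ := hi.separated hf.continuous hp hr
  refine ⟨σ / 3, by positivity, fun g hg hgp h0 h1 x y hxy => ?_⟩
  by_cases hclose : ∃ m k : ℤ, ‖x - y - (m • e1 + k • e2)‖ < r
  · obtain ⟨m, k, hmk⟩ := hclose
    refine ⟨m, k, ?_⟩
    set z := y + m • e1 + k • e2 with hz
    have hzx : ‖x - z‖ < r := by
      have : x - z = x - y - (m • e1 + k • e2) := by rw [hz]; abel
      rwa [this]
    have hgz : g z = g x := (hgp y m k).trans hxy.symm
    have hb : ∀ w ∈ Metric.ball x r, ‖fderiv ℝ g w - fderiv ℝ f x‖ ≤ 3 / 4 * l := by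
      intro w hw
      have h2 := hunif x w (by rwa [← dist_eq_norm])
      have h3 := h1 w
      have := norm_add_le (fderiv ℝ g w - fderiv ℝ f w) (fderiv ℝ f w - fderiv ℝ f x)
      rw [sub_add_sub_cancel] at this
      linarith
    have hmv := (convex_ball x r).norm_image_sub_le_of_norm_fderiv_le'
      (fun w _ => hg w) hb (Metric.mem_ball_self hr)
      (y := z) (by rw [Metric.mem_ball, dist_comm, dist_eq_norm]; exact hzx)
    rw [hgz, sub_self, zero_sub, norm_neg] at hmv
    have h4 := him x (z - x)
    have h5 : ‖z - x‖ ≤ 0 := by nlinarith [norm_nonneg (z - x)]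
    have h6 : z = x := sub_eq_zero.1 (norm_le_zero_iff.1 h5)
    rw [← h6, hz]; abel
  · push Not at hclose
    exfalso
    have h2 := hsep x y hclose
    have h3 := norm_add_le (f x - g x) (g y - f y)
    have h4 : f x - g x + (g y - f y) = f x - f y := by rw [hxy]; abel
    rw [h4, norm_sub_rev (f x) (g x)] at h3
    linarith [h0 x, h0 y]

/-- The integer slopes of the three covectors `(1, 0)`, `(1, 2)`, `(1, -2)`, whose squares span the
symmetric bilinear forms and have the flat metric in the interior of their convex cone. -/
def slope : Fin 3 → ℤ := ![0, 2, -2]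

/-- The coefficients, in terms of the squares of the covectors `(1, slope i)`, of the difference
between the flat metric and the Gram matrix of `p`, `q`. -/
noncomputable def co (p q : E3) : Fin 3 → ℝ :=
  ![1 - ⟪p, p⟫ - (1 - ⟪q, q⟫) / 4, (1 - ⟪q, q⟫) / 8 - ⟪p, q⟫ / 4, (1 - ⟪q, q⟫) / 8 + ⟪p, q⟫ / 4]

/-- The smooth embeddings of the torus from which the isometric one is approximated. Their induced
metric is larger than `μ` times the flat one, and its defect lies in the open cone spanned by the
squares of the covectors `(1, slope i)`, with coefficients less than `M i`. -/
structure Stage (μ : ℝ) (M : Fin 3 → ℝ) (f : E2 → E3) : Prop where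
  smooth : ContDiff ℝ ∞ f
  per : Per f
  inj : InjMod f
  imm : ∃ s > 0, ∀ (x : E2) (a b : ℝ),
    (μ + s) * (a ^ 2 + b ^ 2) ≤ ‖a • fderiv ℝ f x e1 + b • fderiv ℝ f x e2‖ ^ 2
  short : ∃ s > 0, ∀ (x : E2) (i : Fin 3),
    s ≤ co (fderiv ℝ f x e1) (fderiv ℝ f x e2) i ∧
      co (fderiv ℝ f x e1) (fderiv ℝ f x e2) i ≤ M i - s

lemma decomp (v : E2) : v = v 0 • e1 + v 1 • e2 := by
  ext i; fin_cases i <;> simp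

lemma opNorm_le (T : E2 →L[ℝ] E3) : ‖T‖ ≤ ‖T e1‖ + ‖T e2‖ := by
  refine T.opNorm_le_bound (by positivity) fun v => ?_
  conv_lhs => rw [decomp v]
  rw [map_add, map_smul, map_smul]
  refine (norm_add_le _ _).trans ?_
  rw [norm_smul, norm_smul]
  have h0 := PiLp.norm_apply_le v 0
  have h1 := PiLp.norm_apply_le v 1
  nlinarith [norm_nonneg (T e1), norm_nonneg (T e2)]

lemma Stage.lower {μ : ℝ} {M : Fin 3 → ℝ} {f : E2 → E3} (h : Stage μ M f) (hμ : 0 ≤ μ)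
    (x v : E2) : √μ * ‖v‖ ≤ ‖fderiv ℝ f x v‖ := by
  obtain ⟨s, hs, hs'⟩ := h.imm
  have h1 := hs' x (v 0) (v 1)
  rw [← map_smul, ← map_smul, ← map_add, ← decomp v] at h1
  refine le_of_sq_le_sq ?_ (norm_nonneg _)
  rw [mul_pow, Real.sq_sqrt hμ, EuclideanSpace.norm_sq_eq v, Fin.sum_univ_two,
    Real.norm_eq_abs, Real.norm_eq_abs, sq_abs, sq_abs]
  nlinarith [sq_nonneg (v 0), sq_nonneg (v 1)]

lemma inner_close {a b a' b' : E3} {δ : ℝ} (ha : ‖a‖ ≤ 5) (hb : ‖b‖ ≤ 5) (hδ : δ ≤ 1)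
    (ha' : ‖a' - a‖ ≤ δ) (hb' : ‖b' - b‖ ≤ δ) : |⟪a', b'⟫ - ⟪a, b⟫| ≤ 11 * δ := by
  have h0 : 0 ≤ δ := (norm_nonneg _).trans ha'
  have e : ⟪a', b'⟫ - ⟪a, b⟫ = ⟪a' - a, b⟫ + ⟪a, b' - b⟫ + ⟪a' - a, b' - b⟫ := by
    simp only [inner_sub_left, inner_sub_right]; ring
  have h1 := abs_real_inner_le_norm (a' - a) b
  have h2 := abs_real_inner_le_norm a (b' - b)
  have h3 := abs_real_inner_le_norm (a' - a) (b' - b)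
  have h4 : ‖a' - a‖ * ‖b‖ ≤ δ * 5 := mul_le_mul ha' hb (norm_nonneg _) h0
  have h5 : ‖a‖ * ‖b' - b‖ ≤ 5 * δ := mul_le_mul ha hb' (norm_nonneg _) (by norm_num)
  have h6 : ‖a' - a‖ * ‖b' - b‖ ≤ δ * δ := mul_le_mul ha' hb' (norm_nonneg _) h0
  rw [e]
  refine (abs_add_three _ _ _).trans ?_
  nlinarith

/-! ### One corrugation step -/

/-- If the Gram matrix of `p'`, `q'` is that of `p`, `q` plus `A` times the square of the covector
`(1, slope i)`, up to an error `δ`, then only the `i`-th defect coefficient changes noticeably. -/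
lemma co_close {p q p' q' : E3} {A δ : ℝ} (i : Fin 3)
    (hE : |⟪p', p'⟫ - (⟪p, p⟫ + A)| ≤ δ)
    (hF : |⟪p', q'⟫ - (⟪p, q⟫ + slope i * A)| ≤ δ)
    (hG : |⟪q', q'⟫ - (⟪q, q⟫ + (slope i : ℝ) ^ 2 * A)| ≤ δ) (l : Fin 3) :
    |co p' q' l - (co p q l - if l = i then A else 0)| ≤ 2 * δ := by
  rw [abs_le] at *
  fin_cases i <;> fin_cases l <;> simp [co, slope] at * <;> constructor <;> linarith

lemma Stage.norm_le {μ : ℝ} {M : Fin 3 → ℝ} {f : E2 → E3} (h : Stage μ M f) (x : E2) :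
    ‖fderiv ℝ f x e1‖ ≤ 1 ∧ ‖fderiv ℝ f x e2‖ ≤ 1 := by
  obtain ⟨s, hs, hs'⟩ := h.short
  have h0 := (hs' x 0).1
  have h1 := (hs' x 1).1
  have h2 := (hs' x 2).1
  simp [co] at h0 h1 h2
  rw [← sq_le_one_iff₀ (norm_nonneg _), ← sq_le_one_iff₀ (norm_nonneg (fderiv ℝ f x e2))]
  constructor <;> linarith

lemma contDiff_co {p q : E2 → E3} (hp : ContDiff ℝ ∞ p) (hq : ContDiff ℝ ∞ q) (i : Fin 3) :
    ContDiff ℝ ∞ fun x => co (p x) (q x) i := by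
  have h1 := hp.inner ℝ hp
  have h2 := hp.inner ℝ hq
  have h3 := hq.inner ℝ hq
  fin_cases i <;> simp only [co] <;> simp
  · have := (contDiff_const (c := (1 : ℝ)).sub h1).sub ((contDiff_const (c := (1 : ℝ)).sub h3).div_const 4)
    simpa using this
  · have := ((contDiff_const (c := (1 : ℝ)).sub h3).div_const 8).sub (h2.div_const 4)
    simpa using this
  · have := ((contDiff_const (c := (1 : ℝ)).sub h3).div_const 8).add (h2.div_const 4)
    simpa using this

/-- The lower bound `c` on the metric survives the same modification, up to `2 * δ`, because the
added term `A * (a + j * b) ^ 2` is nonnegative. -/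
lemma imm_close {p q p' q' : E3} {A δ j c : ℝ} (hA : 0 ≤ A)
    (hE : |⟪p', p'⟫ - (⟪p, p⟫ + A)| ≤ δ)
    (hF : |⟪p', q'⟫ - (⟪p, q⟫ + j * A)| ≤ δ)
    (hG : |⟪q', q'⟫ - (⟪q, q⟫ + j ^ 2 * A)| ≤ δ) (a b : ℝ)
    (h : c * (a ^ 2 + b ^ 2) ≤ ‖a • p + b • q‖ ^ 2) :
    (c - 2 * δ) * (a ^ 2 + b ^ 2) ≤ ‖a • p' + b • q'‖ ^ 2 := by
  have key : ∀ p q : E3, ‖a • p + b • q‖ ^ 2 = a ^ 2 * ⟪p, p⟫ + 2 * (a * b) * ⟪p, q⟫ + b ^ 2 * ⟪q, q⟫ := by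
    intro p q
    rw [← real_inner_self_eq_norm_sq]
    simp only [inner_add_left, inner_add_right, real_inner_smul_left, real_inner_smul_right,
      real_inner_comm p q]
    ring
  rw [key] at h ⊢
  rw [abs_le] at hE hG
  have h1 : a ^ 2 * (⟪p, p⟫ + A - δ) ≤ a ^ 2 * ⟪p', p'⟫ := by gcongr; linarith
  have h3 : b ^ 2 * (⟪q, q⟫ + j ^ 2 * A - δ) ≤ b ^ 2 * ⟪q', q'⟫ := by gcongr; linarith
  have h2 : |(2 * (a * b)) * (⟪p', q'⟫ - (⟪p, q⟫ + j * A))| ≤ (a ^ 2 + b ^ 2) * δ := by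
    rw [abs_mul]
    refine mul_le_mul ?_ hF (abs_nonneg _) (by positivity)
    rw [abs_le]; constructor <;> nlinarith [sq_nonneg (a - b), sq_nonneg (a + b)]
  have h4 := (abs_le.1 h2).1
  nlinarith [mul_nonneg hA (sq_nonneg (a + j * b))]

/-- A single corrugation: the `i`-th coefficient of the metric defect is multiplied by
`1 - μ / 128`, up to an arbitrarily small error, which is absorbed by the slack in `Stage`. The
factor `1 / 128` is what keeps the change of the differential below half of the lower bound `√μ`
for `fderiv ℝ f x`, as `InjMod.of_close` requires: `4 * √(2 * (μ / 128)) = √μ / 2`. -/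
lemma step {μ : ℝ} (hμ0 : 0 < μ) (hμ1 : μ ≤ 1) {M : Fin 3 → ℝ} (hM : ∀ i, M i ≤ 1) {f : E2 → E3}
    (h : Stage μ M f) (i : Fin 3) {ε : ℝ} (hε : 0 < ε) :
    ∃ g, Stage μ (Function.update M i ((1 - μ / 128) * M i)) g ∧ (∀ x, ‖g x - f x‖ ≤ ε) ∧
      ∀ x, ‖fderiv ℝ g x - fderiv ℝ f x‖ ≤ 4 * √(2 * (μ / 128 * M i)) := by
  obtain ⟨s, hs, himm⟩ := h.imm
  obtain ⟨r, hr, hshort⟩ := h.short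
  set κ : ℝ := μ / 128 with hκ
  have hκ0 : 0 < κ := by positivity
  have hκ1 : κ ≤ 1 / 128 := by rw [hκ]; linarith
  have hMi : 0 < M i := by linarith [(hshort 0 i).1, (hshort 0 i).2]
  let p : E2 → E3 := fun x => fderiv ℝ f x e1
  let q : E2 → E3 := fun x => fderiv ℝ f x e2
  let A : E2 → ℝ := fun x => κ * co (p x) (q x) i
  -- `u` is the derivative in the direction of the kernel `(-slope i, 1)` of the covector
  let u : E2 → E3 := fun x => q x - (slope i : ℝ) • p x
  have hp : ContDiff ℝ ∞ p := (h.smooth.fderiv_right (m := ∞) (by simp)).clm_apply contDiff_const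
  have hq : ContDiff ℝ ∞ q := (h.smooth.fderiv_right (m := ∞) (by simp)).clm_apply contDiff_const
  have hA : ContDiff ℝ ∞ A := contDiff_const.mul (contDiff_co hp hq i)
  have hu : ContDiff ℝ ∞ u := hq.sub (ContDiff.const_smul _ hp)
  have hpp : Per p := fun x m k => by simp only [p]; rw [h.per.fderiv x m k]
  have hqp : Per q := fun x m k => by simp only [q]; rw [h.per.fderiv x m k]
  have hA0 : ∀ x, 0 < A x := fun x => mul_pos hκ0 (hr.trans_le (hshort x i).1)
  have hAM : ∀ x, A x ≤ κ * M i := fun x =>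
    mul_le_mul_of_nonneg_left (by linarith [(hshort x i).2]) hκ0.le
  have hu0 : ∀ x, u x ≠ 0 := by
    intro x hx
    have h1 := himm x (-slope i) 1
    have h2 : (-slope i : ℝ) • fderiv ℝ f x e1 + (1 : ℝ) • fderiv ℝ f x e2 = u x := by
      simp only [u, p, q]; module
    rw [h2, hx, norm_zero] at h1
    have : 0 < (μ + s) * ((-slope i : ℝ) ^ 2 + 1 ^ 2) := by positivity
    linarith
  have hτ : ∀ x, 0 < ⟪tau (u x) (p x), tau (u x) (p x)⟫ := by
    intro x
    set c := ⟪p x, u x⟫ / ⟪u x, u x⟫ with hc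
    have h1 := himm x (1 + c * slope i) (-c)
    have h2 : (1 + c * slope i : ℝ) • fderiv ℝ f x e1 + (-c) • fderiv ℝ f x e2
        = tau (u x) (p x) := by
      rw [tau, ← hc]
      simp only [u, p, q]; module
    rw [h2] at h1
    rw [real_inner_self_eq_norm_sq]
    refine lt_of_lt_of_le (mul_pos (by positivity) ?_) h1
    by_cases hc0 : c = 0
    · rw [hc0]; norm_num
    · have h3 : 0 < c ^ 2 := by positivity
      nlinarith [sq_nonneg (1 + c * slope i)]
  have hF : ContDiff ℝ ∞ fun z : E2 × ℝ => prof (u z.1) (p z.1) (A z.1) z.2 :=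
    contDiff_prof (hu.comp contDiff_fst) (hp.comp contDiff_fst) (hA.comp contDiff_fst) contDiff_snd
      (fun z => hu0 z.1) (fun z => hA0 z.1) (fun z => hτ z.1)
  obtain ⟨ε₁, hε₁, hinj⟩ := h.inj.of_close h.smooth h.per (Real.sqrt_pos.2 hμ0)
    (fun x v => h.lower hμ0.le x v)
  set B : ℝ := √(2 * (κ * M i)) with hB
  have hB0 : 0 < B := Real.sqrt_pos.2 (by positivity)
  obtain ⟨δ, hδ0, hδ⟩ : ∃ δ > 0, δ ≤ 1 ∧ δ ≤ ε ∧ δ ≤ ε₁ ∧ 2 * δ ≤ B ∧ 44 * δ ≤ s ∧ 44 * δ ≤ r := by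
    refine ⟨min 1 (min ε (min ε₁ (min (B / 2) (min (s / 44) (r / 44))))), by positivity, ?_⟩
    refine ⟨min_le_left _ _, ?_, ?_, ?_, ?_, ?_⟩
    · exact (min_le_right _ _).trans (min_le_left _ _)
    · exact (min_le_right _ _).trans ((min_le_right _ _).trans (min_le_left _ _))
    · rw [← le_div_iff₀' (by norm_num)]
      exact (min_le_right _ _).trans ((min_le_right _ _).trans ((min_le_right _ _).trans
        (min_le_left _ _)))
    · rw [← le_div_iff₀' (by norm_num)]
      exact (min_le_right _ _).trans ((min_le_right _ _).trans ((min_le_right _ _).trans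
        ((min_le_right _ _).trans (min_le_left _ _))))
    · rw [← le_div_iff₀' (by norm_num)]
      exact (min_le_right _ _).trans ((min_le_right _ _).trans ((min_le_right _ _).trans
        ((min_le_right _ _).trans (min_le_right _ _))))
  obtain ⟨hδ1, hδε, hδε₁, hδB, hδs, hδr⟩ := hδ
  obtain ⟨g, hg, hgp, hg0, hg1⟩ := corrugate h.smooth h.per hF
    (fun t x m k => by
      have h1 := hpp x m k
      have h2 := hqp x m k
      simp only [u, A, h1, h2])
    (fun x t => prof_periodic _ _ _ t)
    (w := fun x t => prof' (u x) (p x) (A x) t)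
    (fun x t => hasDerivAt_prof (hA0 x) (hτ x) t) (slope i) hδ0
  have hslope : |(slope i : ℝ)| ≤ 2 := by fin_cases i <;> simp [slope]
  -- the metric of `g` and its differential, in terms of those of `f`
  have main : ∀ x, |⟪fderiv ℝ g x e1, fderiv ℝ g x e1⟫ - (⟪p x, p x⟫ + A x)| ≤ 11 * δ ∧
      |⟪fderiv ℝ g x e1, fderiv ℝ g x e2⟫ - (⟪p x, q x⟫ + slope i * A x)| ≤ 11 * δ ∧
      |⟪fderiv ℝ g x e2, fderiv ℝ g x e2⟫ - (⟪q x, q x⟫ + (slope i : ℝ) ^ 2 * A x)| ≤ 11 * δ ∧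
      ‖fderiv ℝ g x - fderiv ℝ f x‖ ≤ 4 * B := by
    intro x
    obtain ⟨t, h1, h2⟩ := hg1 x
    set w := prof' (u x) (p x) (A x) t with hw
    have hw1 : ⟪u x, w⟫ = 0 := inner_prof' (hu0 x) t
    have hw2 : ⟪w, w⟫ ≤ 2 * A x := inner_prof'_self (hA0 x) (hτ x) (hu0 x) t
    have hw3 : ⟪p x + w, p x + w⟫ = ⟪p x, p x⟫ + A x := inner_add_prof' (hA0 x) (hτ x) (hu0 x) t
    have hwB : ‖w‖ ≤ B := by
      rw [hB, Real.le_sqrt (norm_nonneg _) (by positivity), ← real_inner_self_eq_norm_sq]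
      linarith [hAM x]
    have hB1 : B ≤ 1 := by
      rw [hB, Real.sqrt_le_iff]
      refine ⟨zero_le_one, ?_⟩
      nlinarith [hM i]
    have hqe : q x = u x + (slope i : ℝ) • p x := by simp [u]
    have hpu : ⟪p x + w, u x⟫ = ⟪p x, u x⟫ := by
      rw [inner_add_left, real_inner_comm (u x) w, hw1, add_zero]
    have hQ : q x + (slope i : ℝ) • w = u x + (slope i : ℝ) • (p x + w) := by
      rw [hqe]; module
    have hjw : ‖(slope i : ℝ) • w‖ ≤ 2 * ‖w‖ := by
      rw [norm_smul]; exact mul_le_mul_of_nonneg_right hslope (norm_nonneg _)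
    have hn := h.norm_le x
    have hP5 : ‖p x + w‖ ≤ 5 := (norm_add_le _ _).trans (by linarith [hn.1])
    have hQ5 : ‖q x + (slope i : ℝ) • w‖ ≤ 5 := (norm_add_le _ _).trans (by linarith [hn.2])
    refine ⟨?_, ?_, ?_, ?_⟩
    · rw [← hw3]; exact inner_close hP5 hP5 hδ1 h1 h1
    · have e : ⟪p x, q x⟫ + slope i * A x = ⟪p x + w, q x + (slope i : ℝ) • w⟫ := by
        rw [hQ, inner_add_right, inner_smul_right, hw3, hpu, hqe, inner_add_right, inner_smul_right]
        ring
      rw [e]; exact inner_close hP5 hQ5 hδ1 h1 h2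
    · have e : ⟪q x, q x⟫ + (slope i : ℝ) ^ 2 * A x
          = ⟪q x + (slope i : ℝ) • w, q x + (slope i : ℝ) • w⟫ := by
        rw [hQ, hqe]
        simp only [inner_add_right (𝕜 := ℝ) (u x + (slope i : ℝ) • (p x + w)),
          inner_add_right (𝕜 := ℝ) (u x + (slope i : ℝ) • p x)]
        rw [inner_add_left, inner_add_left, inner_add_left, inner_add_left]
        simp only [real_inner_smul_left, real_inner_smul_right]
        rw [hw3, hpu, real_inner_comm (p x + w) (u x), hpu, real_inner_comm (p x) (u x)]
        ring
      rw [e]; exact inner_close hQ5 hQ5 hδ1 h2 h2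
    · refine (opNorm_le _).trans ?_
      have e3 : (fderiv ℝ g x - fderiv ℝ f x) e1 = (fderiv ℝ g x e1 - (p x + w)) + w := by
        simp [p]; abel
      have e4 : (fderiv ℝ g x - fderiv ℝ f x) e2
          = (fderiv ℝ g x e2 - (q x + (slope i : ℝ) • w)) + (slope i : ℝ) • w := by
        simp [q]; abel
      rw [e3, e4]
      have h3 := norm_add_le (fderiv ℝ g x e1 - (p x + w)) w
      have h4 := norm_add_le (fderiv ℝ g x e2 - (q x + (slope i : ℝ) • w)) ((slope i : ℝ) • w)
      linarith
  refine ⟨g, ⟨hg, hgp, ?_, ?_, ?_⟩, fun x => (hg0 x).trans hδε, fun x => (main x).2.2.2⟩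
  · refine hinj g (hg.differentiable (by simp)) hgp (fun x => (hg0 x).trans hδε₁) (fun x => ?_)
    refine (main x).2.2.2.trans ?_
    have : 4 * B ≤ √μ / 2 := by
      rw [hB, le_div_iff₀ (by norm_num)]
      apply Real.le_sqrt_of_sq_le
      rw [mul_pow, mul_pow, Real.sq_sqrt (by positivity), hκ]
      nlinarith [hM i]
    exact this
  · refine ⟨s / 2, by positivity, fun x a b => ?_⟩
    obtain ⟨hE, hF', hG, -⟩ := main x
    refine le_trans ?_ (imm_close (hA0 x).le hE hF' hG a b (himm x a b))
    gcongr
    linarith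
  · refine ⟨r / 4, by positivity, fun x l => ?_⟩
    obtain ⟨hE, hF', hG, -⟩ := main x
    have hc := co_close i hE hF' hG l
    have hs1 := hshort x l
    rw [abs_le] at hc
    by_cases hl : l = i
    · subst hl
      simp only [if_true, A, Function.update_self] at hc ⊢
      simp only [p, q] at hc
      constructor <;> nlinarith
    · simp only [hl, if_false, Function.update_of_ne (Ne.intro hl)] at hc ⊢
      constructor <;> linarith

/-! ### The initial torus, and the combination of three steps -/

/-- A small torus of revolution, from which the iteration starts. -/
noncomputable def f0 (x : E2) : E3 :=
  !₂[1 / (40 * Real.pi) * ((2 + Real.cos (2 * Real.pi * x 0)) * Real.cos (2 * Real.pi * x 1)),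
    1 / (40 * Real.pi) * ((2 + Real.cos (2 * Real.pi * x 0)) * Real.sin (2 * Real.pi * x 1)),
    1 / (40 * Real.pi) * Real.sin (2 * Real.pi * x 0)]

lemma contDiff_f0 : ContDiff ℝ ∞ f0 := by
  rw [contDiff_euclidean]
  have h0 : ContDiff ℝ ∞ fun x : E2 => 2 * Real.pi * x 0 :=
    contDiff_const.mul (contDiff_euclidean.1 contDiff_id 0)
  have h1 : ContDiff ℝ ∞ fun x : E2 => 2 * Real.pi * x 1 :=
    contDiff_const.mul (contDiff_euclidean.1 contDiff_id 1)
  intro i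
  fin_cases i
  · exact contDiff_const.mul ((contDiff_const.add h0.cos).mul h1.cos)
  · exact contDiff_const.mul ((contDiff_const.add h0.cos).mul h1.sin)
  · exact contDiff_const.mul h0.sin

lemma per_f0 : Per f0 := by
  intro x m k
  have h0 : 2 * Real.pi * (x + m • e1 + k • e2 : E2) 0 = 2 * Real.pi * x 0 + m * (2 * Real.pi) := by
    simp; ring
  have h1 : 2 * Real.pi * (x + m • e1 + k • e2 : E2) 1 = 2 * Real.pi * x 1 + k * (2 * Real.pi) := by
    simp; ring
  simp only [f0, h0, h1, Real.cos_add_int_mul_two_pi, Real.sin_add_int_mul_two_pi]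

lemma int_of_cos_sin {a b : ℝ} (hc : Real.cos (2 * Real.pi * a) = Real.cos (2 * Real.pi * b))
    (hs : Real.sin (2 * Real.pi * a) = Real.sin (2 * Real.pi * b)) : ∃ m : ℤ, a - b = m := by
  have h := Real.Angle.cos_sin_inj hc hs
  rw [Real.Angle.angle_eq_iff_two_pi_dvd_sub] at h
  obtain ⟨m, hm⟩ := h
  refine ⟨m, ?_⟩
  have : 2 * Real.pi * (a - b - m) = 0 := by linarith
  have h2 : a - b - m = 0 := by simpa [Real.pi_ne_zero] using this
  linarith

lemma inj_f0 : InjMod f0 := by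
  intro x y hxy
  have hc : (1 / (40 * Real.pi)) ≠ 0 := by positivity
  have h0 := congrArg (fun v : E3 => v 0) hxy
  have h1 := congrArg (fun v : E3 => v 1) hxy
  have h2 := congrArg (fun v : E3 => v 2) hxy
  replace h0 := mul_left_cancel₀ hc h0
  replace h1 := mul_left_cancel₀ hc h1
  replace h2 := mul_left_cancel₀ hc h2
  have sx := Real.sin_sq_add_cos_sq (2 * Real.pi * x 1)
  have sy := Real.sin_sq_add_cos_sq (2 * Real.pi * y 1)
  have bx := Real.neg_one_le_cos (2 * Real.pi * x 0)
  have hy0 := Real.neg_one_le_cos (2 * Real.pi * y 0)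
  have hr : 2 + Real.cos (2 * Real.pi * x 0) = 2 + Real.cos (2 * Real.pi * y 0) := by
    rw [← sq_eq_sq₀ (by linarith) (by linarith)]
    calc _ = ((2 + Real.cos (2 * Real.pi * x 0)) * Real.cos (2 * Real.pi * x 1)) ^ 2
          + ((2 + Real.cos (2 * Real.pi * x 0)) * Real.sin (2 * Real.pi * x 1)) ^ 2 := by
            linear_combination -(2 + Real.cos (2 * Real.pi * x 0)) ^ 2 * sx
      _ = _ := by
        rw [h0, h1]
        linear_combination (2 + Real.cos (2 * Real.pi * y 0)) ^ 2 * sy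
  have hpos : 2 + Real.cos (2 * Real.pi * y 0) ≠ 0 := by linarith
  rw [hr] at h0 h1
  obtain ⟨m, hm⟩ := int_of_cos_sin (add_left_cancel hr) h2
  obtain ⟨k, hk⟩ := int_of_cos_sin (mul_left_cancel₀ hpos h0) (mul_left_cancel₀ hpos h1)
  refine ⟨m, k, ?_⟩
  ext i
  fin_cases i
  · simpa using hm
  · simpa using hk

lemma fderiv_f0 (x v : E2) : fderiv ℝ f0 x v =
    !₂[-(Real.sin (2 * Real.pi * x 0) * Real.cos (2 * Real.pi * x 1)) / 20 * v 0
        - (2 + Real.cos (2 * Real.pi * x 0)) * Real.sin (2 * Real.pi * x 1) / 20 * v 1,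
      -(Real.sin (2 * Real.pi * x 0) * Real.sin (2 * Real.pi * x 1)) / 20 * v 0
        + (2 + Real.cos (2 * Real.pi * x 0)) * Real.cos (2 * Real.pi * x 1) / 20 * v 1,
      Real.cos (2 * Real.pi * x 0) / 20 * v 0] := by
  have hX : HasFDerivAt (fun x : E2 => 2 * Real.pi * x 0)
      ((2 * Real.pi) • (EuclideanSpace.proj 0 : E2 →L[ℝ] ℝ)) x :=
    (EuclideanSpace.proj 0 : E2 →L[ℝ] ℝ).hasFDerivAt.const_mul _
  have hY : HasFDerivAt (fun x : E2 => 2 * Real.pi * x 1)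
      ((2 * Real.pi) • (EuclideanSpace.proj 1 : E2 →L[ℝ] ℝ)) x :=
    (EuclideanSpace.proj 1 : E2 →L[ℝ] ℝ).hasFDerivAt.const_mul _
  have hd : ∀ i, HasFDerivAt (fun x => f0 x i)
      ((EuclideanSpace.proj i : E3 →L[ℝ] ℝ).comp (fderiv ℝ f0 x)) x := fun i =>
    (EuclideanSpace.proj i : E3 →L[ℝ] ℝ).hasFDerivAt.comp x
      (contDiff_f0.differentiable (by simp) x).hasFDerivAt
  have d0 := (((hX.cos.const_add 2).mul hY.cos).const_mul (1 / (40 * Real.pi))).unique (hd 0)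
  have d1 := (((hX.cos.const_add 2).mul hY.sin).const_mul (1 / (40 * Real.pi))).unique (hd 1)
  have d2 := (hX.sin.const_mul (1 / (40 * Real.pi))).unique (hd 2)
  have hπ := Real.pi_ne_zero
  ext i
  fin_cases i
  · refine (DFunLike.congr_fun d0 v).symm.trans ?_
    simp
    field_simp
    ring
  · refine (DFunLike.congr_fun d1 v).symm.trans ?_
    simp
    field_simp
    ring
  · refine (DFunLike.congr_fun d2 v).symm.trans ?_
    simp
    field_simp
    ring

/-- In the coordinates `x`, the metric of `f0` is diagonal, with entries `1 / 400` and
`(2 + cos (2 π x₀)) ^ 2 / 400`, the latter lying between `1 / 400` and `9 / 400`. -/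
lemma stage_f0 : Stage (1 / 800) (fun _ => 1) f0 := by
  have hE : ∀ x, ⟪fderiv ℝ f0 x e1, fderiv ℝ f0 x e1⟫ = 1 / 400 := by
    intro x
    rw [inner3]
    simp [fderiv_f0]
    have h0 := Real.sin_sq_add_cos_sq (2 * Real.pi * x 0)
    have h1 := Real.sin_sq_add_cos_sq (2 * Real.pi * x 1)
    linear_combination Real.sin (2 * Real.pi * x 0) ^ 2 / 400 * h1 + h0 / 400
  have hF : ∀ x, ⟪fderiv ℝ f0 x e1, fderiv ℝ f0 x e2⟫ = 0 := by
    intro x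
    rw [inner3]
    simp [fderiv_f0]
    ring
  have hG : ∀ x, ⟪fderiv ℝ f0 x e2, fderiv ℝ f0 x e2⟫
      = (2 + Real.cos (2 * Real.pi * x 0)) ^ 2 / 400 := by
    intro x
    rw [inner3]
    simp [fderiv_f0]
    have h1 := Real.sin_sq_add_cos_sq (2 * Real.pi * x 1)
    linear_combination (2 + Real.cos (2 * Real.pi * x 0)) ^ 2 / 400 * h1
  refine ⟨contDiff_f0, per_f0, inj_f0, ⟨1 / 800, by norm_num, fun x a b => ?_⟩,
    ⟨1 / 20, by norm_num, fun x i => ?_⟩⟩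
  · rw [← real_inner_self_eq_norm_sq]
    simp only [inner_add_left, inner_add_right, real_inner_smul_left, real_inner_smul_right,
      real_inner_comm (fderiv ℝ f0 x e1) (fderiv ℝ f0 x e2), hE, hF, hG]
    have := Real.neg_one_le_cos (2 * Real.pi * x 0)
    have h2 : 1 ≤ (2 + Real.cos (2 * Real.pi * x 0)) ^ 2 := by nlinarith
    nlinarith [mul_le_mul_of_nonneg_left h2 (sq_nonneg b)]
  · have h1 := Real.neg_one_le_cos (2 * Real.pi * x 0)
    have h2 := Real.cos_le_one (2 * Real.pi * x 0)
    have h3 : (2 + Real.cos (2 * Real.pi * x 0)) ^ 2 ≤ 9 := by nlinarith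
    have h4 := sq_nonneg (2 + Real.cos (2 * Real.pi * x 0))
    simp only [co, hE, hF, hG]
    fin_cases i <;> simp <;> constructor <;> linarith

/-- Three corrugations, one for each covector. -/
lemma step3 {μ : ℝ} (hμ0 : 0 < μ) (hμ1 : μ ≤ 1) {M : ℝ} (hM0 : 0 ≤ M) (hM : M ≤ 1) {f : E2 → E3}
    (h : Stage μ (fun _ => M) f) {ε : ℝ} (hε : 0 < ε) :
    ∃ g, Stage μ (fun _ => (1 - μ / 128) * M) g ∧ (∀ x, ‖g x - f x‖ ≤ ε) ∧
      ∀ x, ‖fderiv ℝ g x - fderiv ℝ f x‖ ≤ 12 * √(2 * (μ / 128 * M)) := by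
  have hle : (1 - μ / 128) * M ≤ 1 := by nlinarith
  obtain ⟨a, ha, ha0, ha1⟩ := step hμ0 hμ1 (fun _ => hM) h 0 (ε := ε / 3) (by positivity)
  have hMa : ∀ i, Function.update (fun _ : Fin 3 => M) 0 ((1 - μ / 128) * M) i ≤ 1 := by
    intro i; fin_cases i <;> simp [Function.update, hM, hle]
  obtain ⟨b, hb, hb0, hb1⟩ := step hμ0 hμ1 hMa ha 1 (ε := ε / 3) (by positivity)
  simp only [ne_eq, one_ne_zero, not_false_eq_true, Function.update_of_ne] at hb hb1
  have hMb : ∀ i, Function.update (Function.update (fun _ : Fin 3 => M) 0 ((1 - μ / 128) * M)) 1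
      ((1 - μ / 128) * M) i ≤ 1 := by
    intro i; fin_cases i <;> simp [Function.update, hM, hle]
  obtain ⟨g, hg, hg0, hg1⟩ := step hμ0 hμ1 hMb hb 2 (ε := ε / 3) (by positivity)
  have e2' : Function.update (Function.update (fun _ : Fin 3 => M) 0 ((1 - μ / 128) * M)) 1
      ((1 - μ / 128) * M) 2 = M := by simp [Function.update]
  rw [e2'] at hg hg1
  refine ⟨g, ?_, fun x => ?_, fun x => ?_⟩
  · convert hg using 1
    ext i; fin_cases i <;> simp [Function.update]
  · have := norm_add₃_le (a := g x - b x) (b := b x - a x) (c := a x - f x)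
    rw [sub_add_sub_cancel, sub_add_sub_cancel] at this
    linarith [ha0 x, hb0 x, hg0 x]
  · have := norm_add₃_le (a := fderiv ℝ g x - fderiv ℝ b x) (b := fderiv ℝ b x - fderiv ℝ a x)
      (c := fderiv ℝ a x - fderiv ℝ f x)
    rw [sub_add_sub_cancel, sub_add_sub_cancel] at this
    linarith [ha1 x, hb1 x, hg1 x]

/-- The lattice `ℤ²` is closed: a vector outside of it stays at positive distance from it. -/
lemma exists_dist_lattice {d : E2} (hd : ¬ ∃ m k : ℤ, d = m • e1 + k • e2) :
    ∃ c > 0, ∀ m k : ℤ, c ≤ ‖d - (m • e1 + k • e2)‖ := by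
  have hpos : ∀ i, d i ≠ round (d i) → 0 < |d i - round (d i)| := fun i hi =>
    abs_pos.2 (sub_ne_zero.2 hi)
  by_cases h0 : d 0 = round (d 0)
  · have h1 : d 1 ≠ round (d 1) := by
      intro h1
      refine hd ⟨round (d 0), round (d 1), ?_⟩
      ext i; fin_cases i
      · simpa using h0
      · simpa using h1
    refine ⟨_, hpos 1 h1, fun m k => (round_le (d 1) k).trans ?_⟩
    have := PiLp.norm_apply_le (d - (m • e1 + k • e2)) 1
    simpa using this
  · refine ⟨_, hpos 0 h0, fun m k => (round_le (d 0) m).trans ?_⟩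
    have := PiLp.norm_apply_le (d - (m • e1 + k • e2)) 0
    simpa using this

/-! ### The limit -/

/-- The `n`-th approximation, whose defect coefficients are less than `r ^ n`, together with
a number `σ` small enough that an error of `2 * σ` cannot make two points at distance at least
`1 / (n + 1)` in the torus collide. -/
def Good (r : ℝ) (n : ℕ) (z : (E2 → E3) × ℝ) : Prop :=
  Stage (1 / 800) (fun _ => r ^ n) z.1 ∧ 0 < z.2 ∧
    ∀ x y : E2, (∀ m k : ℤ, 1 / ((n : ℝ) + 1) ≤ ‖x - y - (m • e1 + k • e2)‖) →
      5 * z.2 ≤ ‖z.1 x - z.1 y‖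

lemma exists_good {r : ℝ} {n : ℕ} {f : E2 → E3} (hf : Stage (1 / 800) (fun _ => r ^ n) f)
    {ε : ℝ} (hε : 0 < ε) : ∃ σ ≤ ε, Good r n (f, σ) := by
  obtain ⟨σ, hσ, h⟩ := hf.inj.separated hf.smooth.continuous hf.per
    (r := 1 / ((n : ℝ) + 1)) (by positivity)
  refine ⟨min (σ / 5) ε, min_le_right _ _, hf, by positivity, fun x y hxy => ?_⟩
  have := h x y hxy
  have h2 := min_le_left (σ / 5) ε
  dsimp only
  linarith

/-- The sequence of approximations, together with its rate of convergence in `C¹`. -/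
lemma exists_seq : ∃ r ∈ Set.Ioo (0 : ℝ) 1, ∃ (F : ℕ → E2 → E3) (σ : ℕ → ℝ) (C : ℝ),
    (∀ n, Good r n (F n, σ n)) ∧ (∀ n, σ (n + 1) ≤ σ n / 2) ∧
    (∀ n x, ‖F (n + 1) x - F n x‖ ≤ σ n) ∧
    ∀ n x, ‖fderiv ℝ (F (n + 1)) x - fderiv ℝ (F n) x‖ ≤ C * √r ^ n := by
  -- `f0` is a `Stage` with `μ = 1 / 800`, and `step3` multiplies the defect by `1 - μ / 128`
  set r : ℝ := 1 - 1 / 800 / 128 with hr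
  have hr0 : 0 < r := by rw [hr]; norm_num
  have hr1 : r < 1 := by rw [hr]; norm_num
  have next : ∀ (n : ℕ) (z : {z // Good r n z}), ∃ z' : {z // Good r (n + 1) z},
      z'.1.2 ≤ z.1.2 / 2 ∧ (∀ x, ‖z'.1.1 x - z.1.1 x‖ ≤ z.1.2) ∧
      ∀ x, ‖fderiv ℝ z'.1.1 x - fderiv ℝ z.1.1 x‖ ≤ 12 * √(2 * (1 / 800 / 128)) * √r ^ n := by
    rintro n ⟨⟨f, σ⟩, hf, hσ, hsep⟩
    obtain ⟨g, hg, hg0, hg1⟩ := step3 (by norm_num) (by norm_num) (pow_nonneg hr0.le n)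
      (pow_le_one₀ hr0.le hr1.le) hf hσ
    rw [← hr, ← pow_succ'] at hg
    obtain ⟨σ', hσ', hgood⟩ := exists_good hg (half_pos hσ)
    refine ⟨⟨(g, σ'), hgood⟩, hσ', hg0, fun x => (hg1 x).trans_eq ?_⟩
    have hsq : √(r ^ n) = √r ^ n := by
      rw [Real.sqrt_eq_iff_mul_self_eq (pow_nonneg hr0.le n) (by positivity), ← mul_pow,
        Real.mul_self_sqrt hr0.le]
    rw [← mul_assoc, Real.sqrt_mul (by norm_num), mul_assoc, hsq]
  choose nxt h1 h2 h3 using next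
  obtain ⟨σ₀, -, h0⟩ := exists_good (r := r) (n := 0) (f := f0) (by simpa using stage_f0) one_pos
  let u : ∀ n, {z // Good r n z} := fun n => Nat.rec ⟨(f0, σ₀), h0⟩ (fun n z => nxt n z) n
  exact ⟨r, ⟨hr0, hr1⟩, fun n => (u n).1.1, fun n => (u n).1.2, _, fun n => (u n).2,
    fun n => h1 n (u n), fun n => h2 n (u n), fun n => h3 n (u n)⟩

lemma gram_of_co {p q : E3} (h : ∀ i, co p q i = 0) :
    ⟪p, p⟫ = 1 ∧ ⟪q, q⟫ = 1 ∧ ⟪p, q⟫ = 0 := by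
  have h0 : 1 - ⟪p, p⟫ - (1 - ⟪q, q⟫) / 4 = 0 := h 0
  have h1 : (1 - ⟪q, q⟫) / 8 - ⟪p, q⟫ / 4 = 0 := h 1
  have h2 : (1 - ⟪q, q⟫) / 8 + ⟪p, q⟫ / 4 = 0 := h 2
  refine ⟨?_, ?_, ?_⟩ <;> linarith

open Filter Topology in
lemma tendsto_co {p q : ℕ → E3} {a b : E3} (hp : Tendsto p atTop (𝓝 a))
    (hq : Tendsto q atTop (𝓝 b)) (i : Fin 3) :
    Tendsto (fun n => co (p n) (q n) i) atTop (𝓝 (co a b i)) := by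
  have h1 := hp.inner (𝕜 := ℝ) hp
  have h2 := hp.inner (𝕜 := ℝ) hq
  have h3 := (hq.inner (𝕜 := ℝ) hq).const_sub 1
  fin_cases i
  · exact (h1.const_sub 1).sub (h3.div_const 4)
  · exact (h3.div_const 8).sub (h2.div_const 4)
  · exact (h3.div_const 8).add (h2.div_const 4)

open Filter Topology in
theorem exists_isometric_embedding : ∃ f : E2 → E3, ContDiff ℝ 1 f ∧ Per f ∧ InjMod f ∧
    ∀ x, ⟪fderiv ℝ f x e1, fderiv ℝ f x e1⟫ = 1 ∧ ⟪fderiv ℝ f x e2, fderiv ℝ f x e2⟫ = 1 ∧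
      ⟪fderiv ℝ f x e1, fderiv ℝ f x e2⟫ = 0 := by
  obtain ⟨r, ⟨hr0, hr1⟩, F, σ, C, hgood, hσ, hF0, hF1⟩ := exists_seq
  have hσm : ∀ n m, σ (m + n) ≤ σ n / 2 ^ m := by
    intro n m
    induction m with
    | zero => simp
    | succ m ih =>
      have h1 := hσ (m + n)
      rw [pow_succ, ← div_div, show m + 1 + n = m + n + 1 by ring]
      linarith
  have hgeom : ∀ n x m, dist (F (m + n) x) (F (m + 1 + n) x) ≤ 2 * σ n / 2 / 2 ^ m := by
    intro n x m
    rw [dist_comm, dist_eq_norm, show m + 1 + n = m + n + 1 by ring, mul_div_cancel_left₀ _ two_ne_zero]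
    exact (hF0 _ x).trans (hσm n m)
  have hlim : ∀ x, ∃ a, Tendsto (fun n => F n x) atTop (𝓝 a) := fun x =>
    cauchySeq_tendsto_of_complete (cauchySeq_of_le_geometric_two (hgeom 0 x))
  choose f hf using hlim
  have hFf : ∀ n x, ‖F n x - f x‖ ≤ 2 * σ n := by
    intro n x
    rw [← dist_eq_norm]
    have := dist_le_of_le_geometric_two_of_tendsto₀ (hgeom n x)
      ((tendsto_add_atTop_iff_nat n).2 (hf x))
    simpa using this
  -- convergence of the differentials
  have hs1 : √r < 1 := by rw [Real.sqrt_lt' one_pos]; simpa using hr1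
  have hdist : ∀ x n, dist (fderiv ℝ (F n) x) (fderiv ℝ (F (n + 1)) x) ≤ C * √r ^ n := by
    intro x n
    rw [dist_comm, dist_eq_norm]; exact hF1 n x
  have hlim' : ∀ x, ∃ a, Tendsto (fun n => fderiv ℝ (F n) x) atTop (𝓝 a) := fun x =>
    cauchySeq_tendsto_of_complete (cauchySeq_of_le_geometric _ _ hs1 (hdist x))
  choose f' hf' using hlim'
  have hunif : TendstoUniformly (fun n => fderiv ℝ (F n)) f' atTop := by
    rw [Metric.tendstoUniformly_iff]
    intro ε hε
    have h0 : Tendsto (fun n => C * √r ^ n / (1 - √r)) atTop (𝓝 0) := by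
      have := ((tendsto_pow_atTop_nhds_zero_of_lt_one (Real.sqrt_nonneg r) hs1).const_mul C).div_const
        (1 - √r)
      simpa using this
    filter_upwards [h0.eventually_lt_const hε] with n hn x
    rw [dist_comm]
    exact (dist_le_of_le_geometric_of_tendsto _ _ hs1 (hdist x) (hf' x) n).trans_lt hn
  have hderiv : ∀ x, HasFDerivAt f (f' x) x := fun x =>
    hasFDerivAt_of_tendstoUniformly hunif
      (fun n x => ((hgood n).1.smooth.differentiable (by simp) x).hasFDerivAt) hf x
  have hfd : fderiv ℝ f = f' := funext fun x => (hderiv x).fderiv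
  have hcont : Continuous f' := hunif.continuous
    (Frequently.of_forall fun n => (hgood n).1.smooth.continuous_fderiv (by simp))
  refine ⟨f, contDiff_one_iff_fderiv.2 ⟨fun x => (hderiv x).differentiableAt, hfd ▸ hcont⟩,
    fun x m k => ?_, fun x y hxy => ?_, fun x => ?_⟩
  · refine tendsto_nhds_unique (hf _) ((hf x).congr fun n => ?_)
    exact ((hgood n).1.per x m k).symm
  · by_contra hne
    obtain ⟨c, hc, hlat⟩ := exists_dist_lattice hne
    obtain ⟨n, hn⟩ := exists_nat_one_div_lt hc
    have h1 := (hgood n).2.2 x y fun m k => hn.le.trans (hlat m k)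
    have h2 := (hgood n).2.1
    have h3 := norm_add_le (F n x - f x) (f y - F n y)
    rw [hxy, sub_add_sub_cancel, norm_sub_rev (f y)] at h3
    dsimp only at h1 h2
    have h4 := hFf n x
    rw [hxy] at h4
    linarith [hFf n y]
  · rw [hfd]
    refine gram_of_co fun i => ?_
    have hv : ∀ v : E2, Tendsto (fun n => fderiv ℝ (F n) x v) atTop (𝓝 (f' x v)) := fun v =>
      ((ContinuousLinearMap.apply ℝ E3 v).continuous.tendsto (f' x)).comp (hf' x)
    have ht := tendsto_co (hv e1) (hv e2) i
    have hz : Tendsto (fun n => co (fderiv ℝ (F n) x e1) (fderiv ℝ (F n) x e2) i) atTop (𝓝 0) := by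
      refine squeeze_zero (fun n => ?_) (fun n => ?_)
        (tendsto_pow_atTop_nhds_zero_of_lt_one hr0.le hr1)
      · obtain ⟨s, hs, h⟩ := (hgood n).1.short
        exact hs.le.trans (h x i).1
      · obtain ⟨s, hs, h⟩ := (hgood n).1.short
        have := (h x i).2
        linarith
    exact tendsto_nhds_unique ht hz

end FlatTorus

/-- **Nash–Kuiper for the flat torus.**
There is a `C¹` map `f : ℝ² → ℝ³` which is `ℤ²`-periodic, injective modulo
`ℤ²`, and satisfies `⟪∂ᵢf, ∂ⱼf⟫ = δᵢⱼ` everywhere; i.e. the flat torus admits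
a `C¹` isometric embedding into `ℝ³`. -/
theorem flat_torus_C1_isometric_embedding :
    ∃ f : EuclideanSpace ℝ (Fin 2) → EuclideanSpace ℝ (Fin 3),
      ContDiff ℝ 1 f ∧
      (∀ (x : EuclideanSpace ℝ (Fin 2)) (m k : ℤ),
        f (x + m • EuclideanSpace.single 0 1 + k • EuclideanSpace.single 1 1) = f x) ∧
      (∀ x y : EuclideanSpace ℝ (Fin 2), f x = f y →
        ∃ m k : ℤ, x - y = m • EuclideanSpace.single 0 1 + k • EuclideanSpace.single 1 1) ∧
      ∀ x : EuclideanSpace ℝ (Fin 2),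
        ⟪fderiv ℝ f x (EuclideanSpace.single 0 1),
          fderiv ℝ f x (EuclideanSpace.single 0 1)⟫ = 1 ∧
        ⟪fderiv ℝ f x (EuclideanSpace.single 1 1),
          fderiv ℝ f x (EuclideanSpace.single 1 1)⟫ = 1 ∧
        ⟪fderiv ℝ f x (EuclideanSpace.single 0 1),
          fderiv ℝ f x (EuclideanSpace.single 1 1)⟫ = 0 := by
  exact FlatTorus.exists_isometric_embedding
end

section
/- Let n ≥ 1. There is NO map f : ℝⁿ → ℝ^{2n−1} which is twice continuously differentiable (C²), ℤⁿ-periodic (f(x + v) = f(x) for all x ∈ ℝⁿ and all v ∈ ℤⁿ ⊆ ℝⁿ), and satisfies at every point x ∈ ℝⁿ: ⟪D f(x)(eᵢ), D f(x)(eⱼ)⟫ = δᵢⱼ for all i, j ∈ Fin n, where D f(x) is the Fréchet derivative of f at x, e₁, …, eₙ is the standard basis of ℝⁿ, ⟪·,·⟫ is the Euclidean inner product on ℝ^{2n−1}, and δᵢⱼ is the Kronecker delta. In other words, the flat n-torus admits no C² isometric immersion into ℝ^{2n−1}. -/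
open scoped RealInnerProductSpace

/-!
Suppose `f` is such a map, write `B = D²f(p)` for its second derivative at `p`.

* Differentiating `⟪Df y, Df z⟫ = ⟪y, z⟫` shows that the trilinear form `⟪B(x, y), Df z⟫` is
  symmetric in `x, y` and antisymmetric in `y, z`, so it vanishes: `B` takes values in the normal
  space (`inner_secondDeriv_deriv_eq_zero`).
* The Gauss equation `⟪B(a, u), B(b, w)⟫ = ⟪B(b, u), B(a, w)⟫` holds (`gauss_equation`). Only two
  derivatives of `f` exist, so the usual third-order computation is unavailable; instead
  the scalar function `x ↦ ⟪Df(x) u, Df(p) w⟫` has differential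
  `-⟪D²f(x)(·, u), Df(x) w - Df(p) w⟫`, which is differentiable at `p` because its second factor
  is differentiable and vanishes there. Symmetry of this second derivative is the Gauss equation.
* By periodicity `‖f‖²` attains its maximum, at `p` say. There `-⟪B(y, y), f(p)⟫ ≥ ‖y‖²`
  (`sq_norm_add_inner_le_zero`).
* These facts are incompatible when the normal space has dimension less than `n`
  (`no_definite_flat_form`, a form of Otsuki's lemma). Put `q(y) = ⟪B(y, y), ξ⟫` with `ξ = -f(p)`
  and let `x` be a unit vector minimizing `‖B(x, x)‖² / q(x)²`. Counting dimensions, there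
  is `y ≠ 0` with `B(x, y) = 0`, and the Gauss equation gives `⟪B(x, x), B(y, y)⟫ = 0`. Hence
  `‖B(x + ty, x + ty)‖² = ‖B(x, x)‖² + O(t⁴)`, while `q(x + ty) = q(x) + t² q(y)` grows to order
  `t²`, contradicting minimality.
-/

section Aux

variable {V E : Type*} [NormedAddCommGroup V] [InnerProductSpace ℝ V]
  [NormedAddCommGroup E] [InnerProductSpace ℝ E]

/-- Product rule for a bilinear pairing at a point where one factor vanishes; the other factor
is then only required to be continuous. -/
lemma hasFDerivAt_bilin_of_eq_zero {F G K : Type*}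
    [NormedAddCommGroup F] [NormedSpace ℝ F] [NormedAddCommGroup G] [NormedSpace ℝ G]
    [NormedAddCommGroup K] [NormedSpace ℝ K] (Γ : F →L[ℝ] G →L[ℝ] K)
    {c : V → F} {c' : V →L[ℝ] F} {A : V → G} {p : V}
    (hc : HasFDerivAt c c' p) (h0 : c p = 0) (hA : ContinuousAt A p) :
    HasFDerivAt (fun x => Γ (c x) (A x)) ((Γ.flip (A p)).comp c') p := by
  have h1 : HasFDerivAt (fun x => Γ (c x) (A p)) ((Γ.flip (A p)).comp c') p :=
    (Γ.flip (A p)).hasFDerivAt.comp p hc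
  have h2 : HasFDerivAt (fun x => Γ (c x) (A x - A p)) (0 : V →L[ℝ] K) p := by
    rw [hasFDerivAt_iff_isLittleO]
    have hcO : (fun x => c x) =O[nhds p] fun x => x - p := by
      simpa [h0] using hc.isBigO_sub
    have hAo : (fun x => A x - A p) =o[nhds p] fun _ => (1 : ℝ) := by
      rw [Asymptotics.isLittleO_one_iff]
      simpa using Filter.Tendsto.sub_const hA (A p)
    have hb : (fun x => Γ (c x) (A x - A p)) =O[nhds p] fun x => ‖c x‖ * ‖A x - A p‖ := by
      refine Asymptotics.IsBigO.of_bound ‖Γ‖ (Filter.Eventually.of_forall fun x => ?_)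
      simpa [mul_assoc] using Γ.le_opNorm₂ (c x) (A x - A p)
    have := hb.trans_isLittleO (hcO.norm_norm.mul_isLittleO hAo.norm_norm)
    simpa [h0] using this
  have h3 := h1.add h2
  simp only [add_zero] at h3
  refine h3.congr_of_eventuallyEq (Filter.Eventually.of_forall fun x => ?_)
  simp

/-- The second derivative of an isometric immersion is normal. -/
lemma inner_secondDeriv_deriv_eq_zero {f : V → E} (hf : ContDiff ℝ 2 f)
    (hiso : ∀ x y z, ⟪fderiv ℝ f x y, fderiv ℝ f x z⟫ = ⟪y, z⟫) (p a b c : V) :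
    ⟪fderiv ℝ (fderiv ℝ f) p a b, fderiv ℝ f p c⟫ = 0 := by
  have hD : HasFDerivAt (fderiv ℝ f) (fderiv ℝ (fderiv ℝ f) p) p :=
    ((hf.fderiv_right (m := 1) (by norm_num)).differentiable (by norm_num) p).hasFDerivAt
  have hsymm : ∀ u v, fderiv ℝ (fderiv ℝ f) p u v = fderiv ℝ (fderiv ℝ f) p v u := fun u v =>
    second_derivative_symmetric
      (fun y => (hf.differentiable (by norm_num) y).hasFDerivAt) hD u v
  have hanti : ∀ u v w, ⟪fderiv ℝ (fderiv ℝ f) p u v, fderiv ℝ f p w⟫ =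
      - ⟪fderiv ℝ (fderiv ℝ f) p u w, fderiv ℝ f p v⟫ := by
    intro u v w
    have h1 := (hD.clm_apply (hasFDerivAt_const v p)).inner ℝ
      (hD.clm_apply (hasFDerivAt_const w p))
    have h2 : HasFDerivAt (fun x => ⟪fderiv ℝ f x v, fderiv ℝ f x w⟫) (0 : V →L[ℝ] ℝ) p := by
      simp only [hiso]; exact hasFDerivAt_const _ _
    have h3 := congrArg (fun L => L u) (h1.unique h2)
    simp at h3
    rw [real_inner_comm] at h3
    linarith
  have e1 := hanti a b c
  have e2 := hanti c a b
  have e3 := hanti b c a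
  rw [hsymm a c] at e1
  rw [hsymm c b] at e2
  rw [hsymm b a] at e3
  linarith

/-- The Gauss equation of a flat `C²` immersion. -/
lemma gauss_equation {f : V → E} (hf : ContDiff ℝ 2 f)
    (hiso : ∀ x y z, ⟪fderiv ℝ f x y, fderiv ℝ f x z⟫ = ⟪y, z⟫) (p a b u w : V) :
    ⟪fderiv ℝ (fderiv ℝ f) p a u, fderiv ℝ (fderiv ℝ f) p b w⟫ =
      ⟪fderiv ℝ (fderiv ℝ f) p b u, fderiv ℝ (fderiv ℝ f) p a w⟫ := by
  have hf1 : ContDiff ℝ 1 (fderiv ℝ f) := hf.fderiv_right (by norm_num)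
  have hD : ∀ x, HasFDerivAt (fderiv ℝ f) (fderiv ℝ (fderiv ℝ f) x) x := fun x =>
    (hf1.differentiable (by norm_num) x).hasFDerivAt
  have hcont : Continuous (fderiv ℝ (fderiv ℝ f)) := hf1.continuous_fderiv (by norm_num)
  let Γ : E →L[ℝ] (V →L[ℝ] E) →L[ℝ] (V →L[ℝ] ℝ) :=
    (ContinuousLinearMap.compL ℝ V E ℝ).comp (innerSL ℝ)
  let A : V → V →L[ℝ] E := fun x => (fderiv ℝ (fderiv ℝ f) x).flip u
  have hA : Continuous A :=
    (ContinuousLinearMap.flipₗᵢ ℝ V V E).continuous.comp hcont |>.clm_apply continuous_const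
  have hc : HasFDerivAt (fun x => fderiv ℝ f p w - fderiv ℝ f x w)
      (-(fderiv ℝ (fderiv ℝ f) p).flip w) p := by
    have := (hasFDerivAt_const (fderiv ℝ f p w) p).sub
      ((hD p).clm_apply (hasFDerivAt_const w p))
    exact this.congr_fderiv (by ext; simp)
  have key := hasFDerivAt_bilin_of_eq_zero Γ hc (by simp) hA.continuousAt
  have hH : ∀ x, HasFDerivAt (fun x => ⟪fderiv ℝ f p w, fderiv ℝ f x u⟫)
      (Γ (fderiv ℝ f p w - fderiv ℝ f x w) (A x)) x := by
    intro x
    have := (hasFDerivAt_const (fderiv ℝ f p w) x).inner ℝ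
      ((hD x).clm_apply (hasFDerivAt_const u x))
    refine this.congr_fderiv ?_
    ext z
    have h0 := inner_secondDeriv_deriv_eq_zero hf hiso x z u w
    rw [real_inner_comm] at h0
    simp [Γ, A, h0]
  have := second_derivative_symmetric hH key a b
  simp [Γ, A] at this
  rw [real_inner_comm, real_inner_comm (fderiv ℝ (fderiv ℝ f) p a w)]
  linarith

/-- Second-order condition at a maximum of `‖f‖²` for an isometric immersion `f`. -/
lemma sq_norm_add_inner_le_zero {f : V → E} (hf : ContDiff ℝ 2 f)
    (hiso : ∀ x y z, ⟪fderiv ℝ f x y, fderiv ℝ f x z⟫ = ⟪y, z⟫) (p : V)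
    (hmax : ∀ x, ‖f x‖ ^ 2 ≤ ‖f p‖ ^ 2) (y : V) :
    ‖y‖ ^ 2 + ⟪fderiv ℝ (fderiv ℝ f) p y y, f p⟫ ≤ 0 := by
  have hf1 : ContDiff ℝ 1 (fderiv ℝ f) := hf.fderiv_right (by norm_num)
  let l : ℝ → V := fun t => p + t • y
  have hl : ∀ t, HasDerivAt l y t := fun t => by
    simpa [l] using ((hasDerivAt_id t).smul_const y).const_add p
  let g : ℝ → ℝ := fun t => ‖f (l t)‖ ^ 2
  have h1 : ∀ t, HasDerivAt (fun t => f (l t)) (fderiv ℝ f (l t) y) t := fun t =>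
    (hf.differentiable (by norm_num) (l t)).hasFDerivAt.comp_hasDerivAt t (hl t)
  have h2 : ∀ t, HasDerivAt (fun t => fderiv ℝ f (l t) y)
      (fderiv ℝ (fderiv ℝ f) (l t) y y) t := fun t => by
    have := ((hf1.differentiable (by norm_num) (l t)).hasFDerivAt.comp_hasDerivAt t (hl t))
    simpa using this.clm_apply (hasDerivAt_const t y)
  have hg : ∀ t, HasDerivAt g (2 * ⟪f (l t), fderiv ℝ f (l t) y⟫) t := fun t => (h1 t).norm_sq
  have hg' : deriv g = fun t => 2 * ⟪f (l t), fderiv ℝ f (l t) y⟫ := funext fun t => (hg t).deriv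
  have hg'' : HasDerivAt (deriv g)
      (2 * (‖y‖ ^ 2 + ⟪fderiv ℝ (fderiv ℝ f) p y y, f p⟫)) 0 := by
    rw [hg']
    refine (((h1 0).inner ℝ (h2 0)).const_mul 2).congr_deriv ?_
    rw [hiso, real_inner_self_eq_norm_sq, real_inner_comm]
    simp [l, add_comm]
  have hgmax : IsLocalMax g 0 := Filter.Eventually.of_forall fun t => by simpa [g, l] using hmax _
  by_contra! hpos
  have hmin : IsLocalMin g 0 := isLocalMin_of_deriv_deriv_pos
    (by rw [hg''.deriv]; positivity) hgmax.deriv_eq_zero (hg 0).continuousAt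
  -- A point that is both a local maximum and a local minimum has vanishing second derivative.
  have hconst : g =ᶠ[nhds 0] fun _ => g 0 := by
    filter_upwards [hgmax, hmin] with t ha hb using le_antisymm ha hb
  have h0 : deriv (deriv g) 0 = 0 := by
    rw [hconst.deriv.deriv_eq]; simp
  rw [hg''.deriv] at h0
  linarith

/-- A form of Otsuki's lemma: a symmetric bilinear form that is orthogonal to the range of an
isometry `D`, satisfies the flat Gauss equation and is positive definite in some direction `ξ`
needs at least `dim V` normal directions. -/
lemma no_definite_flat_form [FiniteDimensional ℝ V] [Nontrivial V] [FiniteDimensional ℝ E]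
    (hdim : Module.finrank ℝ E < 2 * Module.finrank ℝ V)
    (D : V →L[ℝ] E) (B : V →L[ℝ] V →L[ℝ] E) (ξ : E)
    (hD : ∀ y z, ⟪D y, D z⟫ = ⟪y, z⟫) (hsymm : ∀ y z, B y z = B z y)
    (horth : ∀ x y z, ⟪B x y, D z⟫ = 0)
    (hgauss : ∀ a b u w, ⟪B a u, B b w⟫ = ⟪B b u, B a w⟫)
    (hξ : ∀ y, ‖y‖ ^ 2 ≤ ⟪B y y, ξ⟫) : False := by
  have hq : ∀ y, y ≠ 0 → 0 < ⟪B y y, ξ⟫ := fun y hy =>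
    lt_of_lt_of_le (by positivity) (hξ y)
  have hBc : Continuous fun y => B y y := B.continuous.clm_apply continuous_id
  obtain ⟨x, hx, hxmin⟩ := (isCompact_sphere (0 : V) 1).exists_isMinOn
    (NormedSpace.sphere_nonempty.2 zero_le_one)
    (f := fun y => ‖B y y‖ ^ 2 / ⟪B y y, ξ⟫ ^ 2)
    ((hBc.norm.pow 2).continuousOn.div ((hBc.inner continuous_const).pow 2).continuousOn
      fun y hy => by
        have : y ≠ 0 := ne_zero_of_mem_unit_sphere ⟨y, hy⟩
        exact (pow_pos (hq y this) 2).ne')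
  have hx0 : x ≠ 0 := ne_zero_of_mem_unit_sphere ⟨x, hx⟩
  set m := ‖B x x‖ ^ 2 / ⟪B x x, ξ⟫ ^ 2 with hm
  have hmx : m * ⟪B x x, ξ⟫ ^ 2 = ‖B x x‖ ^ 2 :=
    div_mul_cancel₀ _ (pow_pos (hq x hx0) 2).ne'
  have hBx : B x x ≠ 0 := fun h => by simpa [h] using hq x hx0
  have hm0 : 0 < m := div_pos (by positivity) (pow_pos (hq x hx0) 2)
  have hmin : ∀ z, m * ⟪B z z, ξ⟫ ^ 2 ≤ ‖B z z‖ ^ 2 := by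
    intro z
    rcases eq_or_ne z 0 with rfl | hz
    · simp
    have hn : 0 < ‖z‖ := norm_pos_iff.2 hz
    have h := hxmin (show ‖z‖⁻¹ • z ∈ Metric.sphere (0 : V) 1 by
      simp [norm_smul, hn.ne'])
    have hqz := hq z hz
    simp only [Set.mem_ofPred_eq, map_smul, smul_apply, norm_smul,
      real_inner_smul_left, norm_inv, norm_norm] at h
    rw [← hm] at h
    rw [← le_div_iff₀ (by positivity)]
    refine h.trans (le_of_eq ?_)
    field_simp
  -- Dimension count: `(y, z) ↦ B x y + D z` has a kernel, and its two terms are orthogonal.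
  obtain ⟨y, hy0, hy⟩ : ∃ y, y ≠ 0 ∧ B x y = 0 := by
    let L : V × V →ₗ[ℝ] E := ((B x : V →ₗ[ℝ] E)).coprod (D : V →ₗ[ℝ] E)
    have hker : LinearMap.ker L ≠ ⊥ := LinearMap.ker_ne_bot_of_finrank_lt (by
      rw [Module.finrank_prod]; omega)
    obtain ⟨⟨y, z⟩, hyz, hne⟩ := (Submodule.ne_bot_iff _).1 hker
    have hyz' : B x y + D z = 0 := by simpa [L] using hyz
    have hz : z = 0 := by
      have : ⟪B x y + D z, D z⟫ = 0 := by rw [hyz', inner_zero_left]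
      rw [inner_add_left, horth, hD, zero_add] at this
      exact inner_self_eq_zero.1 this
    subst hz
    refine ⟨y, fun h => hne (by simp [h]), by simpa using hyz'⟩
  have hxy : ⟪B x x, B y y⟫ = 0 := by
    rw [hgauss, hsymm y x, hy, inner_zero_left]
  have hexp : ∀ t : ℝ, B (x + t • y) (x + t • y) = B x x + t ^ 2 • B y y := fun t => by
    simp [hsymm y x, hy, smul_smul, pow_two]
  have hineq : ∀ t : ℝ, m * (⟪B x x, ξ⟫ + t ^ 2 * ⟪B y y, ξ⟫) ^ 2 ≤
      ‖B x x‖ ^ 2 + t ^ 4 * ‖B y y‖ ^ 2 := fun t => by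
    have h := hmin (x + t • y)
    rw [hexp, inner_add_left, real_inner_smul_left, norm_add_sq_real, real_inner_smul_right,
      hxy, norm_smul, mul_pow] at h
    simp only [norm_pow, Real.norm_eq_abs, sq_abs] at h
    nlinarith
  set r := m * ⟪B x x, ξ⟫ * ⟪B y y, ξ⟫ with hr
  have hr0 : 0 < r := mul_pos (mul_pos hm0 (hq x hx0)) (hq y hy0)
  -- Take `t² = s` with `s ‖B y y‖² < 2 r`.
  set s := r / (‖B y y‖ ^ 2 + 1) with hs
  have hs0 : 0 < s := by positivity
  have hsr : s * (‖B y y‖ ^ 2 + 1) = r := div_mul_cancel₀ _ (by positivity)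
  have h := hineq (Real.sqrt s)
  have h4 : Real.sqrt s ^ 4 = s ^ 2 := by
    rw [show 4 = 2 * 2 by norm_num, pow_mul, Real.sq_sqrt hs0.le]
  rw [h4, Real.sq_sqrt hs0.le] at h
  have h5 : 0 ≤ m * (s * ⟪B y y, ξ⟫) ^ 2 := by positivity
  have h6 : s * (2 * r) ≤ s * (s * ‖B y y‖ ^ 2) := by rw [hr]; nlinarith
  have h7 := le_of_mul_le_mul_left h6 hs0
  nlinarith

end Aux

/-- **Tompkins' theorem for the flat torus.**
For `n ≥ 1`, there is no `C²`, `ℤⁿ`-periodic map `f : ℝⁿ → ℝ^{2n−1}` with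
`⟪∂ᵢf, ∂ⱼf⟫ = δᵢⱼ` everywhere; i.e. the flat `n`-torus admits no `C²`
isometric immersion into `ℝ^{2n−1}`. -/
theorem flat_torus_no_C2_isometric_immersion
    (n : ℕ) (hn : 1 ≤ n) :
    ¬ ∃ f : EuclideanSpace ℝ (Fin n) → EuclideanSpace ℝ (Fin (2 * n - 1)),
        ContDiff ℝ 2 f ∧
        (∀ (x : EuclideanSpace ℝ (Fin n)) (v : Fin n → ℤ),
          f (x + ∑ i : Fin n, (v i : ℝ) • EuclideanSpace.single i 1) = f x) ∧
        ∀ (x : EuclideanSpace ℝ (Fin n)) (i j : Fin n),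
          ⟪fderiv ℝ f x (EuclideanSpace.single i 1),
            fderiv ℝ f x (EuclideanSpace.single j 1)⟫ =
            if i = j then 1 else 0 := by
  rintro ⟨f, hf, hper, hδ⟩
  have hsum : ∀ y : EuclideanSpace ℝ (Fin n),
      y = ∑ i, y i • EuclideanSpace.single i (1 : ℝ) := fun y => by
    simpa using ((EuclideanSpace.basisFun (Fin n) ℝ).sum_repr y).symm
  have hiso : ∀ x y z, ⟪fderiv ℝ f x y, fderiv ℝ f x z⟫ = ⟪y, z⟫ := by
    intro x y z
    conv_lhs => rw [hsum y, hsum z]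
    simp only [map_sum, map_smul, sum_inner, inner_sum, real_inner_smul_left,
      real_inner_smul_right, hδ]
    simp [PiLp.inner_apply, mul_comm]
  -- Every point is a lattice translate of a point of the unit cube, hence of a ball of radius `n`.
  obtain ⟨p, hp⟩ : ∃ p, ∀ x, ‖f x‖ ^ 2 ≤ ‖f p‖ ^ 2 := by
    obtain ⟨p, -, hp⟩ := (isCompact_closedBall (0 : EuclideanSpace ℝ (Fin n)) n).exists_isMaxOn
      ⟨0, by simp⟩ (hf.continuous.norm.pow 2).continuousOn
    refine ⟨p, fun x => ?_⟩
    have hx := hper x fun i => -⌊x i⌋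
    rw [← hx]
    refine hp ?_
    have : x + ∑ i, ((-⌊x i⌋ : ℤ) : ℝ) • EuclideanSpace.single i (1 : ℝ) =
        ∑ i, Int.fract (x i) • EuclideanSpace.single i (1 : ℝ) := by
      conv_lhs => rw [hsum x]
      rw [← Finset.sum_add_distrib]
      refine Finset.sum_congr rfl fun i _ => ?_
      rw [← add_smul, ← hsum x]
      simp [Int.fract, sub_eq_add_neg]
    rw [this, mem_closedBall_zero_iff]
    refine (norm_sum_le_of_le (f := fun i => Int.fract (x i) • EuclideanSpace.single i (1 : ℝ))
      Finset.univ (n := fun _ => (1 : ℝ)) fun i _ => ?_).trans (by simp)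
    simp [norm_smul, abs_of_nonneg (Int.fract_nonneg (x i)), (Int.fract_lt_one (x i)).le]
  have : Nontrivial (EuclideanSpace ℝ (Fin n)) :=
    Module.nontrivial_of_finrank_pos (R := ℝ) (by simp; omega)
  have hD : HasFDerivAt (fderiv ℝ f) (fderiv ℝ (fderiv ℝ f) p) p :=
    ((hf.fderiv_right (m := 1) (by norm_num)).differentiable (by norm_num) p).hasFDerivAt
  refine no_definite_flat_form (by simp; omega) (fderiv ℝ f p) (fderiv ℝ (fderiv ℝ f) p) (-f p)
    (hiso p) (second_derivative_symmetric
      (fun y => (hf.differentiable (by norm_num) y).hasFDerivAt) hD)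
    (inner_secondDeriv_deriv_eq_zero hf hiso p) (gauss_equation hf hiso p) fun y => ?_
  have := sq_norm_add_inner_le_zero hf hiso p hp y
  rw [inner_neg_right]
  linarith
end

section
/- Let E be a real inner product space, let a ≤ b be real numbers, and let γ : ℝ → E be continuous on the interval [a, b]. If the total variation of γ on [a, b] equals the distance between its endpoints, i.e. eVariationOn γ [a,b] = edist(γ(a), γ(b)) (and this value is finite), then the image of [a, b] under γ is contained in the straight segment joining γ(a) and γ(b): for every t ∈ [a,b], γ(t) ∈ segment(γ(a), γ(b)). -/
/-!
For `t ∈ [a, b]`, additivity of the variation over `[a, t]` and `[t, b]` bounds the broken line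
`γ a, γ t, γ b` by the length of `γ`, which is the length of the chord. So the triangle inequality
`dist (γ a) (γ b) ≤ dist (γ a) (γ t) + dist (γ t) (γ b)` is an equality, and strict convexity of the
norm of `E` (`dist_add_dist_eq_iff`) places `γ t` between `γ a` and `γ b`.
-/

/-- **The bow is longer than the chord.**
Let `E` be a real inner product space, `a ≤ b`, and `γ : ℝ → E` continuous on
`[a, b]`.  If the total variation of `γ` on `[a, b]` equals the distance
between its endpoints, then the image of `[a, b]` lies on the straight
segment joining `γ a` and `γ b`. -/
theorem eVariationOn_eq_edist_imp_mem_segment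
    (E : Type*) [NormedAddCommGroup E] [InnerProductSpace ℝ E]
    (a b : ℝ) (hab : a ≤ b) (γ : ℝ → E)
    (hγ : ContinuousOn γ (Set.Icc a b))
    (hlen : eVariationOn γ (Set.Icc a b) = edist (γ a) (γ b)) :
    ∀ t ∈ Set.Icc a b, γ t ∈ segment ℝ (γ a) (γ b) := by
  intro t ht
  have bow : edist (γ a) (γ t) + edist (γ t) (γ b) ≤ edist (γ a) (γ b) := by
    have add := eVariationOn.Icc_add_Icc γ (s := Set.univ) ht.1 ht.2 (Set.mem_univ t)
    simp only [Set.univ_inter] at add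
    rw [← hlen, ← add]
    exact add_le_add
      (eVariationOn.edist_le γ (Set.left_mem_Icc.2 ht.1) (Set.right_mem_Icc.2 ht.1))
      (eVariationOn.edist_le γ (Set.left_mem_Icc.2 ht.2) (Set.right_mem_Icc.2 ht.2))
  have chord : dist (γ a) (γ t) + dist (γ t) (γ b) = dist (γ a) (γ b) := by
    refine le_antisymm ?_ (dist_triangle _ _ _)
    rwa [edist_dist, edist_dist, edist_dist, ← ENNReal.ofReal_add dist_nonneg dist_nonneg,
      ENNReal.ofReal_le_ofReal_iff dist_nonneg] at bow
  exact mem_segment_iff_wbtw.2 (dist_add_dist_eq_iff.1 chord)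
end
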